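/- Let σ : Σ⁺ → Σ⁺ be a topologically mixing one-sided subshift of finite type with finite alphabet, G a countable group, and T_ψ the group extension determined by a map ψ depending on two coordinates. If T_ψ is transitive, then h_Gur(T_ψ) = h_Gur(T_{ψ^ab}) if and only if G is amenable. -/

import Mathlib

/-!
STATEMENT 2: For a topologically mixing one-sided subshift of finite type with finite
alphabet, a countable group `G` and a transitive group extension `T_ψ` (with `ψ` depending
on two coordinates), the Gurevič entropies satisfy
`h_Gur(T_ψ) = h_Gur(T_{ψ^ab})` if and only if `G` is amenable.
-/

open Filter

namespace DS

/-- The one-sided shift space determined by a 0-1 transition matrix `A` on the alphabet `S`. -/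
def Space {S : Type*} (A : S → S → Bool) : Type _ :=
  {x : ℕ → S // ∀ n : ℕ, A (x n) (x (n + 1)) = true}

variable {S : Type*} {A : S → S → Bool}

/-- The (one-sided) shift map. -/
def shift (x : Space A) : Space A :=
  ⟨fun n => x.1 (n + 1), fun n => x.2 (n + 1)⟩

/-- Aperiodicity of the transition matrix: some power of `A` has all entries positive,
i.e. there is `N ≥ 1` such that any two symbols are joined by an admissible word of
length `N`.  (For subshifts of finite type this is topological mixing.) -/
def Aperiodic (A : S → S → Bool) : Prop :=
  ∃ N : ℕ, 0 < N ∧ ∀ i j : S, ∃ w : ℕ → S,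
    w 0 = i ∧ w N = j ∧ ∀ k < N, A (w k) (w (k + 1)) = true

/-- `ψ` depends only on the first two coordinates. -/
def TwoCoord {G : Type*} (ψ : Space A → G) : Prop :=
  ∀ x y : Space A, x.1 0 = y.1 0 → x.1 1 = y.1 1 → ψ x = ψ y

variable {G : Type*} [Group G]

/-- The cocycle `ψⁿ(x) = ψ(x) ψ(σx) ⋯ ψ(σ^{n-1}x)`. -/
def cocycle (ψ : Space A → G) : ℕ → Space A → G
  | 0, _ => 1
  | n + 1, x => ψ x * cocycle ψ n (shift x)

/-- The group extension `T_ψ(x,g) = (σ x, g ψ(x))`. -/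
def T (ψ : Space A → G) (p : Space A × G) : Space A × G :=
  (shift p.1, p.2 * ψ p.1)

/-- Topological transitivity of the group extension `T_ψ` (density of some orbit in the
product of the shift space, with its product topology over the discrete alphabet, and the
discrete group: the orbit enters every cylinder-times-group-element set). -/
def TransitiveExt (ψ : Space A → G) : Prop :=
  ∃ p : Space A × G, ∀ (m : ℕ) (y : Space A) (g : G), ∃ n : ℕ,
    (∀ j < m, ((T ψ)^[n] p).1.1 j = y.1 j) ∧ ((T ψ)^[n] p).2 = g

/-- Gurevič entropy of the group extension: the exponential growth rate of the number of
periodic points `σⁿ x = x` with trivial cocycle `ψⁿ(x) = e`. -/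
noncomputable def hGur (ψ : Space A → G) : ℝ :=
  Filter.atTop.limsup fun n : ℕ =>
    Real.log (Nat.card {x : Space A // shift^[n] x = x ∧ cocycle ψ n x = 1}) / n

/-- Amenability of `G`: existence of a Banach mean, i.e. a linear functional on the
bounded real-valued functions on `G` which is `G`-invariant and lies between `inf` and
`sup`. -/
def Amenable (G : Type*) [Group G] : Prop :=
  ∃ m : (G → ℝ) → ℝ,
    (∀ x y : G → ℝ, m (x + y) = m x + m y) ∧
    (∀ (c : ℝ) (x : G → ℝ), m (c • x) = c * m x) ∧
    (∀ x : G → ℝ, Bornology.IsBounded (Set.range x) →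
      (∀ g : G, m (fun h => x (h * g)) = m x) ∧
      sInf (Set.range x) ≤ m x ∧ m x ≤ sSup (Set.range x))

end DS

open DS

namespace GE

open Finset

noncomputable section

attribute [local instance] Classical.propDecidable

variable {S : Type*} [Fintype S] {G : Type*} [Group G]

/-- Number of admissible paths of length `n` from `s` to `t` with weight `g`. -/
def W (A : S → S → Bool) (φ : S → S → G) : ℕ → S → S → G → ℕ
  | 0, s, t, g => if s = t ∧ g = 1 then 1 else 0
  | n + 1, s, t, g => ∑ u : S, if A s u = true then W A φ n u t ((φ s u)⁻¹ * g) else 0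

variable {A : S → S → Bool} {φ : S → S → G}

lemma W_zero_self (s : S) : W A φ 0 s s 1 = 1 := by simp [W]

lemma W_edge {n : ℕ} {s u t : S} {g : G} (h : A s u = true) :
    W A φ n u t ((φ s u)⁻¹ * g) ≤ W A φ (n + 1) s t g := by
  rw [W]
  calc W A φ n u t ((φ s u)⁻¹ * g)
      = if A s u = true then W A φ n u t ((φ s u)⁻¹ * g) else 0 := by simp [h]
    _ ≤ _ := Finset.single_le_sum
        (f := fun u => if A s u = true then W A φ n u t ((φ s u)⁻¹ * g) else 0)
        (fun _ _ => Nat.zero_le _) (mem_univ u)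

lemma W_succ_pos {n : ℕ} {s t : S} {g : G} (h : 0 < W A φ (n + 1) s t g) :
    ∃ u, A s u = true ∧ 0 < W A φ n u t ((φ s u)⁻¹ * g) := by
  rw [W] at h
  obtain ⟨u, -, hu⟩ := Finset.exists_ne_zero_of_sum_ne_zero h.ne'
  by_cases hA : A s u = true
  · exact ⟨u, hA, by simpa [hA, Nat.pos_iff_ne_zero] using hu⟩
  · simp [hA] at hu

lemma W_mul (n k : ℕ) (s u t : S) (g h : G) :
    W A φ n s u g * W A φ k u t h ≤ W A φ (n + k) s t (g * h) := by
  induction n generalizing s g with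
  | zero =>
    by_cases H : s = u ∧ g = 1
    · obtain ⟨rfl, rfl⟩ := H
      simp [W]
    · simp [W, H]
  | succ n ih =>
    rw [show n + 1 + k = (n + k) + 1 by ring]
    simp only [W]
    rw [Finset.sum_mul]
    refine Finset.sum_le_sum fun x _ => ?_
    by_cases hA : A s x = true
    · simp only [hA, if_true]
      rw [← mul_assoc]
      exact ih x _
    · simp [hA]

lemma W_le (n : ℕ) (s t : S) (g : G) : W A φ n s t g ≤ (Fintype.card S) ^ n := by
  induction n generalizing s g with
  | zero => simp only [W]; split_ifs <;> simp
  | succ n ih =>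
    rw [W]
    calc _ ≤ ∑ _u : S, (Fintype.card S) ^ n := by
          refine Finset.sum_le_sum fun u _ => ?_
          split_ifs
          · exact ih _ _
          · simp
      _ = _ := by simp [pow_succ, mul_comm]

lemma W_hom {H : Type*} [Group H] (f : G →* H) (n : ℕ) (s t : S) (g : G) :
    W A φ n s t g ≤ W A (fun a b => f (φ a b)) n s t (f g) := by
  induction n generalizing s g with
  | zero =>
    simp only [W]
    by_cases h : s = t ∧ g = 1
    · obtain ⟨rfl, rfl⟩ := h
      simp
    · simp [h]
  | succ n ih =>
    simp only [W]
    refine Finset.sum_le_sum fun u _ => ?_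
    split_ifs
    · simpa using ih u ((φ s u)⁻¹ * g)
    · exact le_rfl

lemma W_support (n : ℕ) (s t : S) : (Function.support (W A φ n s t)).Finite := by
  induction n generalizing s with
  | zero =>
    refine (Set.finite_singleton (1 : G)).subset fun g hg => ?_
    by_contra hne
    apply hg
    simp only [W]
    rw [if_neg]
    rintro ⟨-, h⟩
    exact hne h
  | succ n ih =>
    have : Function.support (W A φ (n + 1) s t) ⊆
        ⋃ u : S, (fun g => φ s u * g) '' Function.support (W A φ n u t) := by
      intro g hg
      obtain ⟨u, -, hu⟩ := W_succ_pos (Nat.pos_of_ne_zero hg)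
      refine Set.mem_iUnion.2 ⟨u, (φ s u)⁻¹ * g, hu.ne', by simp⟩
    exact (Set.finite_iUnion fun u => (ih u).image _).subset this

/-- Fact A: exponential bounds. -/
lemma W_bound {χ : G → ℝ} (hχ : ∀ a b, χ (a * b) = χ a + χ b) {v : S → ℝ} (hv : ∀ s, 0 < v s)
    {r : ℝ} (hr : 0 ≤ r)
    (hM : ∀ s, ∑ u : S, (if A s u = true then Real.exp (χ (φ s u)) * v u else 0) ≤ r * v s)
    (n : ℕ) (s t : S) (g : G) :
    (W A φ n s t g : ℝ) * (Real.exp (χ g) * v t) ≤ r ^ n * v s := by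
  have h1 : χ 1 = 0 := by have := hχ 1 1; simp at this; exact this
  induction n generalizing s g with
  | zero =>
    simp only [W]
    by_cases h : s = t ∧ g = 1
    · obtain ⟨rfl, rfl⟩ := h
      simp [h1]
    · simp [h, (hv s).le]
  | succ n ih =>
    simp only [W]
    push_cast
    rw [Finset.sum_mul]
    calc _ ≤ ∑ u : S, r ^ n * (if A s u = true then Real.exp (χ (φ s u)) * v u else 0) := by
          refine Finset.sum_le_sum fun u _ => ?_
          split_ifs
          · have := ih u ((φ s u)⁻¹ * g)
            have e : χ g = χ (φ s u) + χ ((φ s u)⁻¹ * g) := by rw [← hχ]; simp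
            rw [e, Real.exp_add]
            calc _ = Real.exp (χ (φ s u)) * ((W A φ n u t ((φ s u)⁻¹ * g) : ℝ) *
                  (Real.exp (χ ((φ s u)⁻¹ * g)) * v t)) := by ring
              _ ≤ Real.exp (χ (φ s u)) * (r ^ n * v u) :=
                  mul_le_mul_of_nonneg_left this (Real.exp_pos _).le
              _ = _ := by ring
          · simp
      _ = r ^ n * ∑ u : S, (if A s u = true then Real.exp (χ (φ s u)) * v u else 0) := by
          rw [Finset.mul_sum]
      _ ≤ r ^ n * (r * v s) := mul_le_mul_of_nonneg_left (hM s) (by positivity)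
      _ = _ := by ring

/-- The dual bound for left subinvariant vectors. -/
lemma W_bound_left {χ : G → ℝ} (hχ : ∀ a b, χ (a * b) = χ a + χ b) {w : S → ℝ}
    {r : ℝ} (hr : 0 ≤ r) (hw : ∀ s, 0 < w s)
    (hM : ∀ t, ∑ s : S, (if A s t = true then w s * Real.exp (χ (φ s t)) else 0) ≤ r * w t)
    (n : ℕ) (s t : S) (g : G) (hW : 0 < W A φ n s t g) :
    w s * Real.exp (χ g) ≤ r ^ n * w t := by
  have h1 : χ 1 = 0 := by have := hχ 1 1; simp at this; exact this
  induction n generalizing s g with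
  | zero =>
    simp only [W] at hW
    by_cases h : s = t ∧ g = 1
    · obtain ⟨rfl, rfl⟩ := h
      simp [h1]
    · simp [h] at hW
  | succ n ih =>
    obtain ⟨u, hu, hp⟩ := W_succ_pos hW
    have := ih u _ hp
    have e : χ g = χ (φ s u) + χ ((φ s u)⁻¹ * g) := by rw [← hχ]; simp
    have h2 : w s * Real.exp (χ (φ s u)) ≤ r * w u := by
      refine le_trans ?_ (hM u)
      calc w s * Real.exp (χ (φ s u))
          = (fun s => if A s u = true then w s * Real.exp (χ (φ s u)) else 0) s := by simp [hu]
        _ ≤ _ := Finset.single_le_sum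
          (f := fun s => if A s u = true then w s * Real.exp (χ (φ s u)) else 0)
          (fun i _ => by
            split_ifs
            · exact mul_nonneg (hw i).le (Real.exp_pos _).le
            · exact le_rfl) (mem_univ s)
    rw [e, Real.exp_add]
    calc w s * (Real.exp (χ (φ s u)) * Real.exp (χ ((φ s u)⁻¹ * g)))
        = (w s * Real.exp (χ (φ s u))) * Real.exp (χ ((φ s u)⁻¹ * g)) := by ring
      _ ≤ (r * w u) * Real.exp (χ ((φ s u)⁻¹ * g)) :=
          mul_le_mul_of_nonneg_right h2 (Real.exp_pos _).le
      _ = r * (w u * Real.exp (χ ((φ s u)⁻¹ * g))) := by ring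
      _ ≤ r * (r ^ n * w t) := mul_le_mul_of_nonneg_left this hr
      _ = _ := by ring

end

end GE

namespace GE

open Finset

noncomputable section

set_option linter.unusedSectionVars false

attribute [local instance] Classical.propDecidable

variable {S : Type*} [Fintype S] {G : Type*} [Group G]
variable {A : S → S → Bool} {φ : S → S → G}

/-- weight of the first `n` edges of a sequence -/
def pr (φ : S → S → G) : ℕ → (ℕ → S) → G
  | 0, _ => 1
  | n + 1, w => φ (w 0) (w 1) * pr φ n (fun k => w (k + 1))

lemma pr_congr (n : ℕ) (w w' : ℕ → S) (h : ∀ k ≤ n, w k = w' k) : pr φ n w = pr φ n w' := by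
  induction n generalizing w w' with
  | zero => rfl
  | succ n ih =>
    simp only [pr]
    rw [h 0 (by omega), h 1 (by omega), ih _ (fun k => w' (k + 1)) fun k hk => h (k + 1) (by omega)]

/-- paths of length `n`, as eventually constant sequences -/
def Path (A : S → S → Bool) (φ : S → S → G) (n : ℕ) (s t : S) (g : G) : Set (ℕ → S) :=
  {w | w 0 = s ∧ (∀ k, n ≤ k → w k = t) ∧ (∀ k < n, A (w k) (w (k + 1)) = true) ∧ pr φ n w = g}

lemma path_card (n : ℕ) (s t : S) (g : G) :
    Finite (Path A φ n s t g) ∧ Nat.card (Path A φ n s t g) = W A φ n s t g := by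
  induction n generalizing s g with
  | zero =>
    by_cases h : s = t ∧ g = 1
    · obtain ⟨rfl, rfl⟩ := h
      have : Path A φ 0 s s 1 = {fun _ => s} := by
        ext w
        constructor
        · rintro ⟨-, h, -⟩
          funext k
          exact h k (Nat.zero_le _)
        · rintro rfl
          exact ⟨rfl, fun _ _ => rfl, fun _ h => absurd h (Nat.not_lt_zero _), rfl⟩
      rw [this]
      exact ⟨inferInstance, by simp [W]⟩
    · have : Path A φ 0 s t g = ∅ := by
        ext w
        simp only [Set.mem_empty_iff_false, iff_false]
        rintro ⟨h0, h1, -, h2⟩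
        exact h ⟨by rw [← h0, h1 0 le_rfl], h2.symm⟩
      rw [this]
      exact ⟨inferInstance, by simp [W, h]⟩
  | succ n ih =>
    let X := Σ u : {u : S // A s u = true}, Path A φ n u.1 t ((φ s u.1)⁻¹ * g)
    have hX : ∀ p q : X, p.2.1 = q.2.1 → p = q := by
      rintro ⟨⟨u, hu⟩, ⟨w, hw⟩⟩ ⟨⟨u', hu'⟩, ⟨w', hw'⟩⟩ h
      obtain rfl : w = w' := h
      obtain rfl : u = u' := hw.1.symm.trans hw'.1
      rfl
    let F : Path A φ (n + 1) s t g → X := fun w =>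
      ⟨⟨w.1 1, by have := w.2.2.2.1 0 (by omega); rwa [w.2.1] at this⟩,
        ⟨fun k => w.1 (k + 1), rfl, fun k hk => w.2.2.1 (k + 1) (by omega),
          fun k hk => w.2.2.2.1 (k + 1) (by omega), by
            have := w.2.2.2.2
            rw [pr, w.2.1] at this
            exact eq_inv_mul_of_mul_eq this⟩⟩
    have hF : Function.Bijective F := by
      constructor
      · intro w w' h
        have h2 : (fun k => w.1 (k + 1)) = fun k => w'.1 (k + 1) :=
          congrArg (fun p : X => p.2.1) h
        apply Subtype.ext
        funext k
        cases k with
        | zero => rw [w.2.1, w'.2.1]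
        | succ k => exact congrFun h2 k
      · rintro ⟨⟨u, hu⟩, ⟨w, hw⟩⟩
        refine ⟨⟨fun k => Nat.casesOn k s w, rfl, ?_, ?_, ?_⟩, ?_⟩
        · intro k hk
          cases k with
          | zero => omega
          | succ k => exact hw.2.1 k (by omega)
        · intro k hk
          cases k with
          | zero => 
            have := hw.1
            simpa [this] using hu
          | succ k => exact hw.2.2.1 k (by omega)
        · have h1 := hw.1
          have h2 := hw.2.2.2
          show φ s (w 0) * pr φ n w = g
          rw [h1, h2]; simp
        · apply hX
          rfl
    have hfin : ∀ u : {u : S // A s u = true},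
      Finite (Path A φ n u.1 t ((φ s u.1)⁻¹ * g)) := fun u => (ih _ _).1
    have e := Equiv.ofBijective F hF
    refine ⟨Finite.of_equiv X e.symm, ?_⟩
    rw [Nat.card_congr e, Nat.card_sigma, W, ← Finset.sum_filter]
    rw [Finset.sum_subtype (p := fun u => A s u = true) _ (by simp)]
    exact Finset.sum_congr rfl fun u _ => (ih _ _).2

lemma shift_iter (n : ℕ) (x : Space A) (k : ℕ) : (shift^[n] x).1 k = x.1 (k + n) := by
  induction n generalizing x with
  | zero => rfl
  | succ n ih =>
    rw [Function.iterate_succ_apply, ih]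
    show x.1 (k + n + 1) = _
    rfl

lemma cocycle_pr {ψ : Space A → G} (hφ : ∀ x : Space A, ψ x = φ (x.1 0) (x.1 1)) (n : ℕ)
    (x : Space A) : cocycle ψ n x = pr φ n x.1 := by
  induction n generalizing x with
  | zero => rfl
  | succ n ih => rw [cocycle, pr, ih, hφ]; rfl

lemma per_card {ψ : Space A → G} (hφ : ∀ x : Space A, ψ x = φ (x.1 0) (x.1 1)) (n : ℕ)
    (hn : 0 < n) :
    Nat.card {x : Space A // shift^[n] x = x ∧ cocycle ψ n x = 1} = ∑ s, W A φ n s s 1 := by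
  let X := Σ s : S, Path A φ n s s (1 : G)
  have hX : ∀ p q : X, p.2.1 = q.2.1 → p = q := by
    rintro ⟨s, ⟨w, hw⟩⟩ ⟨s', ⟨w', hw'⟩⟩ h
    obtain rfl : w = w' := h
    obtain rfl : s = s' := hw.1.symm.trans hw'.1
    rfl
  have hper : ∀ x : Space A, shift^[n] x = x → ∀ k, x.1 (k + n) = x.1 k := by
    intro x hx k
    rw [← shift_iter, hx]
  let F : {x : Space A // shift^[n] x = x ∧ cocycle ψ n x = 1} → X := fun x =>
    ⟨x.1.1 0, ⟨fun k => if k < n then x.1.1 k else x.1.1 0, by simp, by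
        intro k hk; simp [hk], by
        intro k hk
        simp only [hk, if_true]
        split_ifs with h
        · exact x.1.2 k
        · obtain rfl : n = k + 1 := by omega
          have := hper x.1 x.2.1 0
          rw [← this, zero_add]
          exact x.1.2 k, by
        refine Eq.trans ?_ ((cocycle_pr hφ n x.1).symm.trans x.2.2)
        apply pr_congr
        intro k hk
        split_ifs with h
        · rfl
        · obtain rfl : n = k := by omega
          have := hper x.1 x.2.1 0
          rw [← this, zero_add]⟩⟩
  have hmod : ∀ x : Space A, shift^[n] x = x → ∀ k, x.1 (k % n) = x.1 k := by
    intro x hx k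
    have h : Function.Periodic x.1 n := hper x hx
    exact h.map_mod_nat k
  have hF : Function.Bijective F := by
    constructor
    · intro x y h
      have h2 : (fun k => if k < n then x.1.1 k else x.1.1 0) =
        fun k => if k < n then y.1.1 k else y.1.1 0 := congrArg (fun p : X => p.2.1) h
      apply Subtype.ext
      apply Subtype.ext
      funext k
      rw [← hmod x.1 x.2.1, ← hmod y.1 y.2.1]
      have := congrFun h2 (k % n)
      simpa [Nat.mod_lt k hn] using this
    · rintro ⟨s, ⟨w, hw⟩⟩
      have hwn : ∀ k, k ≤ n → w (k % n) = w k := by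
        intro k hk
        rcases hk.lt_or_eq with h | rfl
        · rw [Nat.mod_eq_of_lt h]
        · rw [Nat.mod_self, hw.1, hw.2.1 k le_rfl]
      let x : Space A := ⟨fun k => w (k % n), by
        intro k
        have h1 := Nat.mod_lt k hn
        have h3 := hw.2.2.1 (k % n) h1
        rw [← hwn (k % n + 1) (by omega)] at h3
        simpa using h3⟩
      refine ⟨⟨x, ?_, ?_⟩, ?_⟩
      · apply Subtype.ext
        funext k
        rw [shift_iter]
        simp [x]
      · rw [cocycle_pr hφ, ← hw.2.2.2]
        exact pr_congr _ _ _ fun k hk => hwn k hk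
      · apply hX
        funext k
        show (if k < n then w (k % n) else w (0 % n)) = w k
        split_ifs with h
        · exact hwn k h.le
        · rw [hwn 0 (by omega), hw.1, hw.2.1 k (by omega)]
  have hfin : ∀ s : S, Finite (Path A φ n s s (1 : G)) := fun s => (path_card _ _ _ _).1
  rw [Nat.card_congr (Equiv.ofBijective F hF), Nat.card_sigma]
  exact Finset.sum_congr rfl fun u _ => (path_card _ _ _ _).2

/-! ### transitivity -/

lemma W_orbit {ψ : Space A → G} (hφ : ∀ x : Space A, ψ x = φ (x.1 0) (x.1 1)) (n : ℕ)
    (x : Space A) : 0 < W A φ n (x.1 0) (x.1 n) (cocycle ψ n x) := by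
  induction n generalizing x with
  | zero => simp [W, cocycle]
  | succ n ih =>
    refine lt_of_lt_of_le (ih (shift x)) ?_
    have := W_edge (φ := φ) (n := n) (t := x.1 (n + 1)) (g := cocycle ψ (n + 1) x) (x.2 0)
    refine le_trans (le_of_eq ?_) this
    rw [cocycle, hφ]
    simp [shift]

lemma T_iter (ψ : Space A → G) (n : ℕ) (x : Space A) (g : G) :
    (T ψ)^[n] (x, g) = (shift^[n] x, g * cocycle ψ n x) := by
  induction n generalizing x g with
  | zero => simp [cocycle]
  | succ n ih =>
    rw [Function.iterate_succ_apply, Function.iterate_succ_apply, T, ih, cocycle, mul_assoc]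

lemma irred {ψ : Space A → G} (hφ : ∀ x : Space A, ψ x = φ (x.1 0) (x.1 1))
    (hA : Aperiodic A) (ht : TransitiveExt ψ) (s t : S) (g : G) :
    ∃ n, 0 < n ∧ 0 < W A φ n s t g := by
  obtain ⟨N, hN, hA⟩ := hA
  have hpred : ∀ t, ∃ s, A s t = true := by
    intro t
    obtain ⟨w, -, h1, h2⟩ := hA t t
    refine ⟨w (N - 1), ?_⟩
    have := h2 (N - 1) (by omega)
    rwa [show N - 1 + 1 = N by omega, h1] at this
  have hsucc : ∀ t, ∃ s, A t s = true := by
    intro t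
    obtain ⟨w, h1, -, h2⟩ := hA t t
    refine ⟨w 1, ?_⟩
    have := h2 0 hN
    rwa [h1] at this
  choose f hf using hsucc
  have hpt : ∀ t : S, ∃ y : Space A, y.1 0 = t := fun t =>
    ⟨⟨fun n => f^[n] t, fun n => by
      show A (f^[n] t) (f^[n + 1] t) = true
      rw [Function.iterate_succ_apply']; exact hf _⟩, rfl⟩
  have hsurj : ∀ q : Space A × G, ∃ q', T ψ q' = q := by
    rintro ⟨y, h⟩
    obtain ⟨a, ha⟩ := hpred (y.1 0)
    let y' : Space A := ⟨fun k => Nat.casesOn k a y.1, fun k => by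
      cases k with
      | zero => exact ha
      | succ k => exact y.2 k⟩
    refine ⟨(y', h * (ψ y')⁻¹), ?_⟩
    rw [T]
    simp only [inv_mul_cancel_right]
    rfl
  obtain ⟨p, hp⟩ := ht
  have key : ∀ k m : ℕ, ∀ y : Space A, ∀ h : G, ∃ n, k ≤ n ∧
      (∀ j < m, ((T ψ)^[n] p).1.1 j = y.1 j) ∧ ((T ψ)^[n] p).2 = h := by
    intro k
    induction k with
    | zero => 
      intro m y h
      obtain ⟨n, hn⟩ := hp m y h
      exact ⟨n, Nat.zero_le _, hn⟩
    | succ k ih =>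
      intro m y h
      obtain ⟨⟨y', h'⟩, hq⟩ := hsurj (y, h)
      obtain ⟨n, hn, h1, h2⟩ := ih (m + 2) y' h'
      have e1 : y = shift y' := (congrArg Prod.fst hq).symm
      have e2 : h' * ψ y' = h := congrArg Prod.snd hq
      refine ⟨n + 1, by omega, ?_, ?_⟩
      · intro j hj
        rw [Function.iterate_succ_apply', e1]
        exact h1 (j + 1) (by omega)
      · rw [Function.iterate_succ_apply', ← e2]
        show ((T ψ)^[n] p).2 * ψ ((T ψ)^[n] p).1 = _
        rw [h2, hφ, hφ, h1 0 (by omega), h1 1 (by omega)]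
  obtain ⟨ys, hys⟩ := hpt s
  obtain ⟨yt, hyt⟩ := hpt t
  obtain ⟨n1, -, h1, h1'⟩ := key 0 1 ys 1
  obtain ⟨n2, hn, h2, h2'⟩ := key (n1 + 1) 1 yt g
  obtain ⟨k, rfl⟩ : ∃ k, n2 = k + n1 := ⟨n2 - n1, by omega⟩
  refine ⟨k, by omega, ?_⟩
  rw [Function.iterate_add_apply] at h2 h2'
  set q := (T ψ)^[n1] p with hq
  have hT : (T ψ)^[k] q = (shift^[k] q.1, q.2 * cocycle ψ k q.1) := T_iter ψ k q.1 q.2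
  rw [hT] at h2 h2'
  have := W_orbit hφ k q.1
  have a1 := h1 0 (by omega)
  have a2 := h2 0 (by omega)
  simp only [shift_iter, zero_add] at a2
  simp only [h1', one_mul] at h2'
  rwa [a1, a2, h2', hys, hyt] at this

end

end GE

namespace GE

open Finset

noncomputable section

set_option linter.unusedSectionVars false

attribute [local instance] Classical.propDecidable

variable {S : Type*} [Fintype S] {G : Type*} [Group G]
variable {A : S → S → Bool} {φ : S → S → G}

/-- irreducibility of the extended graph -/
def Irr (A : S → S → Bool) (φ : S → S → G) : Prop :=
  ∀ s t g, ∃ n, 0 < n ∧ 0 < W A φ n s t g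

lemma u_nonneg (ψ : Space A → G) (n : ℕ) :
    0 ≤ Real.log (Nat.card {x : Space A // shift^[n] x = x ∧ cocycle ψ n x = 1}) / n :=
  div_nonneg (Real.log_natCast_nonneg _) (Nat.cast_nonneg _)

lemma u_le {ψ : Space A → G} (hφ : ∀ x : Space A, ψ x = φ (x.1 0) (x.1 1)) (n : ℕ) :
    Real.log (Nat.card {x : Space A // shift^[n] x = x ∧ cocycle ψ n x = 1}) / n
      ≤ 2 * Real.log (Fintype.card S) := by
  have h0 : 0 ≤ Real.log (Fintype.card S) := Real.log_natCast_nonneg _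
  rcases Nat.eq_zero_or_pos n with rfl | hn
  · simp [h0]
  have hn' : (0 : ℝ) < n := by exact_mod_cast hn
  rw [div_le_iff₀ hn', per_card hφ n hn]
  set c := ∑ s, W A φ n s s 1 with hc
  rcases Nat.eq_zero_or_pos c with h | h
  · rw [h]; simp; positivity
  have hb : c ≤ (Fintype.card S) ^ (n + 1) := by
    calc c ≤ ∑ _s : S, (Fintype.card S) ^ n := Finset.sum_le_sum fun s _ => W_le _ _ _ _
      _ = _ := by simp [pow_succ, mul_comm]
  calc Real.log c ≤ Real.log (((Fintype.card S) ^ (n + 1) : ℕ) : ℝ) :=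
        Real.log_le_log (by exact_mod_cast h) (by exact_mod_cast hb)
    _ = (n + 1) * Real.log (Fintype.card S) := by push_cast; rw [Real.log_pow]; push_cast; ring
    _ ≤ _ := by
      have : (1 : ℝ) ≤ n := by exact_mod_cast hn
      nlinarith

lemma growth_le {ψ : Space A → G} (hφ : ∀ x : Space A, ψ x = φ (x.1 0) (x.1 1))
    (hirr : Irr A φ) {q : ℝ} (hq : 0 < q) (h : hGur ψ < Real.log q) (s t : S) (g : G) :
    ∃ C : ℝ, ∀ n, (W A φ n s t g : ℝ) ≤ C * q ^ n := by
  have hbd : IsBoundedUnder (· ≤ ·) atTop fun n : ℕ =>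
      Real.log (Nat.card {x : Space A // shift^[n] x = x ∧ cocycle ψ n x = 1}) / n :=
    isBoundedUnder_of ⟨_, u_le hφ⟩
  have hev := eventually_lt_of_limsup_lt h hbd
  obtain ⟨n0, hn0⟩ := eventually_atTop.1 hev
  obtain ⟨k, hk, hW⟩ := hirr t s g⁻¹
  have hcnt : ∀ n, n0 ≤ n → 0 < n → ((∑ s, W A φ n s s 1 : ℕ) : ℝ) ≤ q ^ n := by
    intro n hn hpos
    have := hn0 n hn
    have hn' : (0 : ℝ) < n := by exact_mod_cast hpos
    rw [div_lt_iff₀ hn', per_card hφ n hpos] at this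
    set c := ∑ s, W A φ n s s 1 with hc
    rcases Nat.eq_zero_or_pos c with h | h
    · rw [h]; simp; positivity
    have h' : (0 : ℝ) < c := by exact_mod_cast h
    rw [mul_comm, ← Real.log_pow] at this
    exact ((Real.log_lt_log_iff h' (by positivity)).1 this).le
  refine ⟨q ^ k + ∑ i ∈ range n0, (W A φ i s t g : ℝ) / q ^ i, fun n => ?_⟩
  have hsum : 0 ≤ ∑ i ∈ range n0, (W A φ i s t g : ℝ) / q ^ i :=
    Finset.sum_nonneg fun i _ => by positivity
  rcases lt_or_ge n n0 with hn | hn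
  · have : (W A φ n s t g : ℝ) / q ^ n ≤ ∑ i ∈ range n0, (W A φ i s t g : ℝ) / q ^ i :=
      Finset.single_le_sum (f := fun i => (W A φ i s t g : ℝ) / q ^ i)
        (fun i _ => by positivity) (Finset.mem_range.2 hn)
    rw [div_le_iff₀ (by positivity)] at this
    refine this.trans ?_
    have : 0 < q ^ k := by positivity
    gcongr
    linarith
  · have h1 : W A φ n s t g ≤ ∑ s, W A φ (n + k) s s 1 := by
      calc W A φ n s t g ≤ W A φ n s t g * W A φ k t s g⁻¹ := Nat.le_mul_of_pos_right _ hW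
        _ ≤ W A φ (n + k) s s (g * g⁻¹) := W_mul _ _ _ _ _ _ _
        _ = W A φ (n + k) s s 1 := by rw [mul_inv_cancel]
        _ ≤ _ := Finset.single_le_sum (f := fun s => W A φ (n + k) s s 1)
          (fun _ _ => Nat.zero_le _) (mem_univ s)
    have h2 := hcnt (n + k) (by omega) (by omega)
    calc (W A φ n s t g : ℝ) ≤ ((∑ s, W A φ (n + k) s s 1 : ℕ) : ℝ) := by exact_mod_cast h1
      _ ≤ q ^ (n + k) := h2
      _ = q ^ k * q ^ n := by rw [pow_add]; ring
      _ ≤ _ := by gcongr; linarith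

lemma one_le_of_growth (hirr : Irr A φ) (s0 : S) {q C : ℝ} (hq : 0 < q)
    (hC : ∀ n, (W A φ n s0 s0 1 : ℝ) ≤ C * q ^ n) : 1 ≤ q := by
  by_contra hlt
  push Not at hlt
  obtain ⟨k, hk, hW⟩ := hirr s0 s0 1
  have h1 : ∀ j, 0 < W A φ (j * k) s0 s0 1 := by
    intro j
    induction j with
    | zero => simp [W]
    | succ j ih =>
      rw [Nat.succ_mul]
      refine lt_of_lt_of_le (Nat.mul_pos ih hW) ?_
      have := W_mul (A := A) (φ := φ) (j * k) k s0 s0 s0 1 1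
      rwa [one_mul] at this
  have hqk : q ^ k < 1 := pow_lt_one₀ hq.le hlt hk.ne'
  have hlim : Tendsto (fun j : ℕ => C * (q ^ k) ^ j) atTop (nhds (C * 0)) :=
    (tendsto_pow_atTop_nhds_zero_of_lt_one (by positivity) hqk).const_mul C
  rw [mul_zero] at hlim
  obtain ⟨j, hj⟩ := (hlim.eventually (gt_mem_nhds (zero_lt_one))).exists
  have h2 := hC (j * k)
  have h3 : (1 : ℝ) ≤ W A φ (j * k) s0 s0 1 := by exact_mod_cast h1 j
  rw [mul_comm j k, pow_mul] at h2
  rw [mul_comm j k] at h3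
  linarith

lemma hGur_le {ψ : Space A → G} (hφ : ∀ x : Space A, ψ x = φ (x.1 0) (x.1 1))
    (hirr : Irr A φ) (s0 : S) {q C : ℝ} (hq : 0 < q)
    (hC : ∀ n, (W A φ n s0 s0 1 : ℝ) ≤ C * q ^ n) : hGur ψ ≤ Real.log q := by
  have hq1 := one_le_of_growth hirr s0 hq hC
  have hC1 : 1 ≤ C := by have := hC 0; simpa [W] using this
  have hlq : 0 ≤ Real.log q := Real.log_nonneg hq1
  have hk : ∀ s, ∃ k, ∀ n, W A φ n s s 1 ≤ W A φ (n + k) s0 s0 1 := by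
    intro s
    obtain ⟨k1, -, h1⟩ := hirr s0 s 1
    obtain ⟨k2, -, h2⟩ := hirr s s0 1
    refine ⟨k1 + k2, fun n => ?_⟩
    calc W A φ n s s 1 ≤ W A φ k1 s0 s 1 * W A φ n s s 1 := Nat.le_mul_of_pos_left _ h1
      _ ≤ W A φ (k1 + n) s0 s (1 * 1) := W_mul _ _ _ _ _ _ _
      _ ≤ W A φ (k1 + n) s0 s (1 * 1) * W A φ k2 s s0 1 := Nat.le_mul_of_pos_right _ h2
      _ ≤ W A φ (k1 + n + k2) s0 s0 (1 * 1 * 1) := W_mul _ _ _ _ _ _ _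
      _ = _ := by simp only [mul_one]; congr 1; ring
  choose k hk using hk
  set C' : ℝ := ∑ s, C * q ^ k s with hC'
  have hC'0 : 1 ≤ C' := by
    calc (1 : ℝ) ≤ C * q ^ k s0 := by
          have := one_le_pow₀ hq1 (n := k s0)
          nlinarith
      _ ≤ _ := Finset.single_le_sum (f := fun s => C * q ^ k s)
        (fun s _ => by positivity) (mem_univ s0)
  have hcnt : ∀ n, ((∑ s, W A φ n s s 1 : ℕ) : ℝ) ≤ C' * q ^ n := by
    intro n
    push_cast
    rw [hC', Finset.sum_mul]
    refine Finset.sum_le_sum fun s _ => ?_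
    calc (W A φ n s s 1 : ℝ) ≤ (W A φ (n + k s) s0 s0 1 : ℝ) := by exact_mod_cast hk s n
      _ ≤ C * q ^ (n + k s) := hC _
      _ = _ := by rw [pow_add]; ring
  refine le_of_forall_pos_le_add fun ε hε => ?_
  refine limsup_le_of_le ((isBoundedUnder_of ⟨0, u_nonneg ψ⟩ :
    IsBoundedUnder (· ≥ ·) atTop _).isCoboundedUnder_le) ?_
  have hlim : Tendsto (fun n : ℕ => Real.log C' / n) atTop (nhds 0) :=
    tendsto_const_div_atTop_nhds_zero_nat _
  filter_upwards [hlim.eventually (gt_mem_nhds hε), eventually_gt_atTop 0] with n hn hpos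
  have hn' : (0 : ℝ) < n := by exact_mod_cast hpos
  rw [div_lt_iff₀ hn'] at hn
  rw [div_le_iff₀ hn', per_card hφ n hpos]
  have hb := hcnt n
  set c := ∑ s, W A φ n s s 1 with hc
  rcases Nat.eq_zero_or_pos c with h | h
  · rw [h]; simp; positivity
  have h' : (0 : ℝ) < c := by exact_mod_cast h
  calc Real.log c ≤ Real.log (C' * q ^ n) := Real.log_le_log h' hb
    _ = Real.log C' + n * Real.log q := by
      rw [Real.log_mul (by positivity) (by positivity), Real.log_pow]
    _ ≤ _ := by nlinarith

lemma irr_hom (hirr : Irr A φ) {H : Type*} [Group H] (f : G →* H) (hf : Function.Surjective f) :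
    Irr A (fun a b => f (φ a b)) := by
  intro s t h
  obtain ⟨g, rfl⟩ := hf h
  obtain ⟨n, hn, hW⟩ := hirr s t g
  exact ⟨n, hn, hW.trans_le (W_hom f n s t g)⟩

lemma hGur_le_ab {ψ : Space A → G} (hφ : ∀ x : Space A, ψ x = φ (x.1 0) (x.1 1))
    (hirr : Irr A φ) (s0 : S) {H : Type*} [Group H] (f : G →* H) (hf : Function.Surjective f) :
    hGur ψ ≤ hGur (fun x => f (ψ x)) := by
  refine le_of_forall_pos_le_add fun ε hε => ?_
  set h := hGur (fun x => f (ψ x))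
  have hφ' : ∀ x : Space A, f (ψ x) = (fun a b => f (φ a b)) (x.1 0) (x.1 1) := by
    intro x; rw [hφ]
  obtain ⟨C, hC⟩ := growth_le (ψ := fun x => f (ψ x)) hφ' (irr_hom hirr f hf)
    (Real.exp_pos (h + ε)) (by rw [Real.log_exp]; linarith) s0 s0 1
  have := hGur_le hφ hirr s0 (Real.exp_pos (h + ε)) (C := C) (fun n => by
    refine le_trans ?_ (hC n)
    have := W_hom (A := A) (φ := φ) f n s0 s0 1
    rw [map_one] at this
    exact_mod_cast this)
  rwa [Real.log_exp] at this

end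

end GE

namespace GE

open Finset

noncomputable section

set_option linter.unusedSectionVars false

attribute [local instance] Classical.propDecidable

variable {S : Type*} [Fintype S] {G : Type*} [Group G]
variable {A : S → S → Bool} {φ : S → S → G}

/-- Green function. -/
def Gr (A : S → S → Bool) (φ : S → S → G) (r : ℝ) (t0 : S) (s : S) (g : G) : ℝ :=
  ∑' n : ℕ, (W A φ n s t0 g⁻¹ : ℝ) / r ^ n

lemma Gr_summable {q r : ℝ} (hq : 0 < q) (hqr : q < r)
    (hC : ∀ s t g, ∃ C : ℝ, ∀ n, (W A φ n s t g : ℝ) ≤ C * q ^ n) (t0 s : S) (g : G) :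
    Summable fun n : ℕ => (W A φ n s t0 g⁻¹ : ℝ) / r ^ n := by
  have hr : 0 < r := hq.trans hqr
  obtain ⟨C, hC⟩ := hC s t0 g⁻¹
  have hgeo : Summable fun n : ℕ => C * (q / r) ^ n :=
    (summable_geometric_of_lt_one (by positivity) ((div_lt_one hr).2 hqr)).mul_left C
  refine Summable.of_nonneg_of_le (fun n => by positivity) (fun n => ?_) hgeo
  rw [div_pow, ← mul_div_assoc]
  gcongr
  exact hC n

lemma Gr_pos {q r : ℝ} (hq : 0 < q) (hqr : q < r)
    (hC : ∀ s t g, ∃ C : ℝ, ∀ n, (W A φ n s t g : ℝ) ≤ C * q ^ n) (hirr : Irr A φ)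
    (t0 s : S) (g : G) : 0 < Gr A φ r t0 s g := by
  have hr : 0 < r := hq.trans hqr
  obtain ⟨k, -, hk⟩ := hirr s t0 g⁻¹
  exact (Gr_summable hq hqr hC t0 s g).tsum_pos (fun n => by positivity) k (by positivity)

lemma Gr_harnack {q r : ℝ} (hq : 0 < q) (hqr : q < r)
    (hC : ∀ s t g, ∃ C : ℝ, ∀ n, (W A φ n s t g : ℝ) ≤ C * q ^ n)
    (t0 s u : S) (g γ : G) (k : ℕ) (hk : 0 < W A φ k s u γ) :
    Gr A φ r t0 u (g * γ) ≤ r ^ k * Gr A φ r t0 s g := by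
  have hr : 0 < r := hq.trans hqr
  have hs := Gr_summable hq hqr hC t0 s g
  have hs' : Summable fun n : ℕ => (W A φ (n + k) s t0 g⁻¹ : ℝ) / r ^ (n + k) :=
    (summable_nat_add_iff k).2 hs
  have h1 : ∑' n : ℕ, (W A φ (n + k) s t0 g⁻¹ : ℝ) / r ^ (n + k) ≤ Gr A φ r t0 s g := by
    rw [Gr, ← hs.sum_add_tsum_nat_add k]
    have : 0 ≤ ∑ i ∈ range k, (W A φ i s t0 g⁻¹ : ℝ) / r ^ i :=
      Finset.sum_nonneg fun i _ => by positivity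
    linarith
  calc Gr A φ r t0 u (g * γ)
      ≤ ∑' n : ℕ, r ^ k * ((W A φ (n + k) s t0 g⁻¹ : ℝ) / r ^ (n + k)) := by
        refine Summable.tsum_le_tsum (fun n => ?_) (Gr_summable hq hqr hC t0 u (g * γ))
          (hs'.mul_left _)
        have h2 : W A φ n u t0 (g * γ)⁻¹ ≤ W A φ (n + k) s t0 g⁻¹ := by
          calc _ ≤ W A φ k s u γ * W A φ n u t0 (g * γ)⁻¹ := Nat.le_mul_of_pos_left _ hk
            _ ≤ W A φ (k + n) s t0 (γ * (g * γ)⁻¹) := W_mul _ _ _ _ _ _ _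
            _ = _ := by rw [add_comm]; congr 1; group
        have h3 : (W A φ n u t0 (g * γ)⁻¹ : ℝ) ≤ W A φ (n + k) s t0 g⁻¹ := by exact_mod_cast h2
        rw [pow_add, mul_div_assoc', mul_comm (r ^ k), mul_div_mul_right _ _ (by positivity)]
        gcongr
    _ = r ^ k * ∑' n : ℕ, (W A φ (n + k) s t0 g⁻¹ : ℝ) / r ^ (n + k) := tsum_mul_left
    _ ≤ _ := by gcongr

lemma Gr_step {q r : ℝ} (hq : 0 < q) (hqr : q < r)
    (hC : ∀ s t g, ∃ C : ℝ, ∀ n, (W A φ n s t g : ℝ) ≤ C * q ^ n) (t0 s : S) (g : G) :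
    ∑ u, (if A s u = true then Gr A φ r t0 u (g * φ s u) else 0) ≤ r * Gr A φ r t0 s g := by
  have hr : 0 < r := hq.trans hqr
  have hs := Gr_summable hq hqr hC t0 s g
  have hs' : Summable fun n : ℕ => (W A φ (n + 1) s t0 g⁻¹ : ℝ) / r ^ (n + 1) :=
    (summable_nat_add_iff 1).2 hs
  have h1 : ∑' n : ℕ, (W A φ (n + 1) s t0 g⁻¹ : ℝ) / r ^ (n + 1) ≤ Gr A φ r t0 s g := by
    rw [Gr, hs.tsum_eq_zero_add]
    have : 0 ≤ (W A φ 0 s t0 g⁻¹ : ℝ) / r ^ 0 := by positivity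
    linarith
  have h2 : ∑ u, (if A s u = true then Gr A φ r t0 u (g * φ s u) else 0)
      = ∑' n : ℕ, ∑ u, (if A s u = true then (W A φ n u t0 ((φ s u)⁻¹ * g⁻¹) : ℝ) / r ^ n else 0) := by
    rw [Summable.tsum_finsetSum]
    · refine Finset.sum_congr rfl fun u _ => ?_
      split_ifs
      · simp [Gr]
      · simp
    · intro u _
      split_ifs
      · simpa using Gr_summable hq hqr hC t0 u (g * φ s u)
      · exact summable_zero
  rw [h2]
  calc _ = ∑' n : ℕ, r * ((W A φ (n + 1) s t0 g⁻¹ : ℝ) / r ^ (n + 1)) := by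
        refine tsum_congr fun n => ?_
        rw [W]
        push_cast
        rw [pow_succ', mul_div_assoc', mul_div_mul_left _ _ hr.ne', Finset.sum_div]
        refine Finset.sum_congr rfl fun u _ => ?_
        split_ifs <;> simp
    _ = r * ∑' n : ℕ, (W A φ (n + 1) s t0 g⁻¹ : ℝ) / r ^ (n + 1) := tsum_mul_left
    _ ≤ _ := by gcongr

lemma bdd_of {x : G → ℝ} {C : ℝ} (h : ∀ g, |x g| ≤ C) : Bornology.IsBounded (Set.range x) := by
  rw [isBounded_iff_forall_norm_le]
  exact ⟨C, by rintro _ ⟨g, rfl⟩; exact h g⟩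

/-- Key lemma: on an amenable group an exponential character with a subinvariant vector exists. -/
lemma exists_char (ham : Amenable G) (hirr : Irr A φ) {q r : ℝ} (hq : 0 < q) (hqr : q < r)
    (hC : ∀ s t g, ∃ C : ℝ, ∀ n, (W A φ n s t g : ℝ) ≤ C * q ^ n) (s0 : S) :
    ∃ (χ : G → ℝ) (v : S → ℝ), (∀ a b, χ (a * b) = χ a + χ b) ∧ (∀ s, 0 < v s) ∧
      ∀ s, ∑ u : S, (if A s u = true then Real.exp (χ (φ s u)) * v u else 0) ≤ r * v s := by
  have hr : 0 < r := hq.trans hqr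
  obtain ⟨m, hadd, hsmul, hm⟩ := ham
  -- basic properties of the mean
  have hzero : m 0 = 0 := by have := hsmul 0 0; simpa using this
  have hsub : ∀ x y : G → ℝ, m (x - y) = m x - m y := by
    intro x y
    rw [sub_eq_add_neg, hadd, show -y = (-1 : ℝ) • y by simp, hsmul]; ring
  have hsum : ∀ x : S → G → ℝ, m (∑ u, x u) = ∑ u, m (x u) := by
    intro x
    induction (univ : Finset S) using Finset.induction_on with
    | empty => simpa using hzero
    | insert a s ha ih => rw [Finset.sum_insert ha, Finset.sum_insert ha, hadd, ih]
  have hle : ∀ (x : G → ℝ) (c : ℝ), Bornology.IsBounded (Set.range x) → (∀ g, x g ≤ c) →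
      m x ≤ c := by
    intro x c hb hx
    refine (hm x hb).2.2.trans (csSup_le (Set.range_nonempty _) ?_)
    rintro _ ⟨g, rfl⟩
    exact hx g
  have hge : ∀ (x : G → ℝ) (c : ℝ), Bornology.IsBounded (Set.range x) → (∀ g, c ≤ x g) →
      c ≤ m x := by
    intro x c hb hx
    refine le_trans (le_csInf (Set.range_nonempty _) ?_) (hm x hb).2.1
    rintro _ ⟨g, rfl⟩
    exact hx g
  have hconst : ∀ c : ℝ, m (fun _ => c) = c := by
    intro c
    have hb : Bornology.IsBounded (Set.range fun _ : G => c) := bdd_of (C := |c|) fun _ => le_rfl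
    exact le_antisymm (hle _ _ hb fun _ => le_rfl) (hge _ _ hb fun _ => le_rfl)
  have hjensen : ∀ (y : G → ℝ) (C : ℝ), (∀ g, |y g| ≤ C) →
      Real.exp (m y) ≤ m (fun g => Real.exp (y g)) := by
    intro y C hy
    set c := m y with hc
    let z : G → ℝ := (fun g => Real.exp (y g)) - Real.exp c • (y - fun _ => c)
    have hz : m z = m (fun g => Real.exp (y g)) := by
      simp only [z]
      rw [hsub, hsmul, hsub, hconst, ← hc]; simp
    rw [← hz]
    apply hge
    · refine bdd_of (C := Real.exp C + Real.exp c * (C + |c|)) fun g => ?_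
      have h1 : |Real.exp (y g)| ≤ Real.exp C := by
        rw [abs_of_pos (Real.exp_pos _)]
        exact Real.exp_le_exp.2 ((le_abs_self _).trans (hy g))
      have h2 : |Real.exp c * (y g - c)| ≤ Real.exp c * (C + |c|) := by
        rw [abs_mul, abs_of_pos (Real.exp_pos _)]
        gcongr
        exact (abs_sub _ _).trans (by gcongr; exact hy g)
      calc |z g| = |Real.exp (y g) - Real.exp c * (y g - c)| := rfl
        _ ≤ _ := (abs_sub _ _).trans (add_le_add h1 h2)
    · intro g
      show Real.exp c ≤ Real.exp (y g) - Real.exp c * (y g - c)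
      have h1 := Real.add_one_le_exp (y g - c)
      have h2 : Real.exp (y g) = Real.exp c * Real.exp (y g - c) := by
        rw [← Real.exp_add]; congr 1; ring
      rw [h2]
      nlinarith [Real.exp_pos c]
  -- log ratios
  let H : S → G → ℝ := fun s g => Gr A φ r s0 s g
  have hH : ∀ s g, 0 < H s g := fun s g => Gr_pos hq hqr hC hirr s0 s g
  let y : S → S → G → G → ℝ := fun s u γ g => Real.log (H u (g * γ)) - Real.log (H s g)
  have hup : ∀ s u γ, ∃ C, ∀ g, y s u γ g ≤ C := by
    intro s u γ
    obtain ⟨k, -, hk⟩ := hirr s u γ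
    refine ⟨Real.log (r ^ k), fun g => ?_⟩
    have h1 := Gr_harnack hq hqr hC s0 s u g γ k hk
    have h2 := Real.log_le_log (hH u (g * γ)) h1
    rw [Real.log_mul (by positivity) (hH s g).ne'] at h2
    show Real.log (H u (g * γ)) - Real.log (H s g) ≤ _
    linarith
  have hbd : ∀ s u γ, ∃ C, ∀ g, |y s u γ g| ≤ C := by
    intro s u γ
    obtain ⟨C1, h1⟩ := hup s u γ
    obtain ⟨C2, h2⟩ := hup u s γ⁻¹
    refine ⟨max C1 C2, fun g => abs_le.2 ⟨?_, (h1 g).trans (le_max_left _ _)⟩⟩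
    have := h2 (g * γ)
    simp only [y, mul_inv_cancel_right] at this
    have h3 := le_max_right C1 C2
    simp only [y]
    linarith
  have hbd' : ∀ s u γ, Bornology.IsBounded (Set.range (y s u γ)) := by
    intro s u γ
    obtain ⟨C, hC⟩ := hbd s u γ
    exact bdd_of hC
  -- chain rule
  have hchain : ∀ s t u γ δ, m (y s u (γ * δ)) = m (y s t γ) + m (y t u δ) := by
    intro s t u γ δ
    rw [← (hm _ (hbd' t u δ)).1 γ, ← hadd]
    congr 1
    funext g
    simp only [y, Pi.add_apply, mul_assoc]
    ring
  refine ⟨fun γ => m (y s0 s0 γ), fun s => Real.exp (m (y s0 s 1)), fun a b => hchain _ _ _ _ _,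
    fun s => Real.exp_pos _, fun s => ?_⟩
  have e1 : ∀ u, Real.exp (m (y s0 s0 (φ s u))) * Real.exp (m (y s0 u 1)) =
      Real.exp (m (y s u (φ s u))) * Real.exp (m (y s0 s 1)) := by
    intro u
    rw [← Real.exp_add, ← Real.exp_add]
    congr 1
    have h1 := hchain s0 s0 u (φ s u) 1
    have h2 := hchain s0 s u 1 (φ s u)
    rw [mul_one] at h1
    rw [one_mul] at h2
    linarith
  have e2 : ∑ u : S, (if A s u = true then Real.exp (m (y s u (φ s u))) else 0) ≤ r := by
    let z : S → G → ℝ := fun u =>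
      if A s u = true then fun g => Real.exp (y s u (φ s u) g) else 0
    have h1 : ∑ u : S, (if A s u = true then Real.exp (m (y s u (φ s u))) else 0) ≤
        m (∑ u, z u) := by
      rw [hsum]
      refine Finset.sum_le_sum fun u _ => ?_
      simp only [z]
      split_ifs
      · obtain ⟨C, hC⟩ := hbd s u (φ s u)
        exact hjensen _ C hC
      · exact hzero.ge
    refine h1.trans ?_
    have hzg : ∀ g, (∑ u, z u) g =
        (∑ u, (if A s u = true then H u (g * φ s u) else 0)) / H s g := by
      intro g
      rw [Finset.sum_apply, Finset.sum_div]
      refine Finset.sum_congr rfl fun u _ => ?_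
      simp only [z]
      split_ifs
      · simp only [y]
        rw [Real.exp_sub, Real.exp_log (hH _ _), Real.exp_log (hH _ _)]
      · simp
    have hub : ∀ g, (∑ u, z u) g ≤ r := by
      intro g
      rw [hzg, div_le_iff₀ (hH s g)]
      exact Gr_step hq hqr hC s0 s g
    refine hle _ _ (bdd_of (C := r) fun g => ?_) hub
    rw [abs_of_nonneg]
    · exact hub g
    · rw [hzg]
      refine div_nonneg (Finset.sum_nonneg fun u _ => ?_) (hH s g).le
      split_ifs
      · exact (hH _ _).le
      · exact le_rfl
  calc _ = (∑ u : S, (if A s u = true then Real.exp (m (y s u (φ s u))) else 0)) *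
        Real.exp (m (y s0 s 1)) := by
        rw [Finset.sum_mul]
        refine Finset.sum_congr rfl fun u _ => ?_
        split_ifs
        · exact e1 u
        · simp
    _ ≤ _ := by gcongr

/-- Amenability implies equality. -/
lemma hGur_ab_le {ψ : Space A → G} (hφ : ∀ x : Space A, ψ x = φ (x.1 0) (x.1 1))
    (hirr : Irr A φ) (s0 : S) (ham : Amenable G) :
    hGur (fun x => Abelianization.of (ψ x)) ≤ hGur ψ := by
  refine le_of_forall_pos_le_add fun ε hε => ?_
  set h := hGur ψ with hh
  have hq : Real.exp (h + ε / 2) < Real.exp (h + ε) := Real.exp_lt_exp.2 (by linarith)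
  have hC : ∀ s t g, ∃ C : ℝ, ∀ n, (W A φ n s t g : ℝ) ≤ C * (Real.exp (h + ε / 2)) ^ n :=
    fun s t g => growth_le hφ hirr (Real.exp_pos _) (by rw [Real.log_exp]; linarith) s t g
  obtain ⟨χ, v, hχ, hv, hM⟩ := exists_char ham hirr (Real.exp_pos _) hq hC s0
  let X : G →* Multiplicative ℝ := MonoidHom.mk' (fun g => Multiplicative.ofAdd (χ g))
    (fun a b => by rw [hχ]; rfl)
  let χ' : Abelianization G → ℝ := fun a => Multiplicative.toAdd (Abelianization.lift X a)
  have hχ' : ∀ a b, χ' (a * b) = χ' a + χ' b := by intro a b; simp [χ']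
  have e : ∀ g, χ' (Abelianization.of g) = χ g := by intro g; simp [χ', X]
  have hφ' : ∀ x : Space A, Abelianization.of (ψ x) =
      (fun a b => Abelianization.of (φ a b)) (x.1 0) (x.1 1) := by intro x; rw [hφ]
  have hb := W_bound (A := A) (φ := fun a b => Abelianization.of (φ a b)) hχ' hv
    (Real.exp_pos (h + ε)).le (by simpa only [e] using hM)
  have hsurj : Function.Surjective (Abelianization.of : G →* Abelianization G) :=
    QuotientGroup.mk_surjective
  have := hGur_le (ψ := fun x => Abelianization.of (ψ x)) hφ' (irr_hom hirr _ hsurj) s0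
    (Real.exp_pos (h + ε)) (C := 1) (fun n => by
      have h1 := hb n s0 s0 1
      have h2 : χ' 1 = 0 := by simp [χ']
      rw [h2, Real.exp_zero, one_mul] at h1
      rw [one_mul]
      exact le_of_mul_le_mul_right h1 (hv s0))
  rwa [Real.log_exp] at this

end

end GE

namespace GE

open Finset

noncomputable section

set_option linter.unusedSectionVars false

attribute [local instance] Classical.propDecidable

/-- approximately invariant means exist -/
def AlmInv (G : Type*) [Group G] : Prop :=
  ∀ (F : Finset G) (ε : ℝ), 0 < ε → ∃ L : (G → ℝ) →ₗ[ℝ] ℝ,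
    (∀ (x : G → ℝ) (c : ℝ), (∀ g, x g ≤ c) → L x ≤ c) ∧
    ∀ γ ∈ F, ∀ x : G → ℝ, (∀ g, |x g| ≤ 1) → |L (fun h => x (h * γ)) - L x| ≤ ε

lemma AlmInv.amenable {G : Type*} [Group G] (h : AlmInv G) : Amenable G := by
  have h' : ∀ i : Finset G × ℕ, ∃ L : (G → ℝ) →ₗ[ℝ] ℝ,
    (∀ (x : G → ℝ) (c : ℝ), (∀ g, x g ≤ c) → L x ≤ c) ∧
    ∀ γ ∈ i.1, ∀ x : G → ℝ, (∀ g, |x g| ≤ 1) →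
      |L (fun h => x (h * γ)) - L x| ≤ 1 / ((i.2 : ℝ) + 1) :=
    fun i => h i.1 _ (by positivity)
  choose L hL1 hL2 using h'
  have hL3 : ∀ i (x : G → ℝ) (c : ℝ), (∀ g, c ≤ x g) → c ≤ L i x := by
    intro i x c hx
    have := hL1 i (-x) (-c) (fun g => neg_le_neg (hx g))
    rw [map_neg] at this
    linarith
  let U : Ultrafilter (Finset G × ℕ) := Ultrafilter.of atTop
  have hU : (U : Filter (Finset G × ℕ)) ≤ atTop := Ultrafilter.of_le _
  let B : Submodule ℝ (G → ℝ) :=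
    { carrier := {x | ∃ C, ∀ g, |x g| ≤ C}
      add_mem' := by
        rintro x y ⟨C, hC⟩ ⟨D, hD⟩
        exact ⟨C + D, fun g => (abs_add_le _ _).trans (add_le_add (hC g) (hD g))⟩
      zero_mem' := ⟨0, fun g => by simp⟩
      smul_mem' := by
        rintro c x ⟨C, hC⟩
        refine ⟨|c| * C, fun g => ?_⟩
        rw [Pi.smul_apply, smul_eq_mul, abs_mul]
        exact mul_le_mul_of_nonneg_left (hC g) (abs_nonneg _) }
  have hex : ∀ x : B, ∃ a : ℝ, Tendsto (fun i => L i x.1) U (nhds a) := by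
    rintro ⟨x, C, hC⟩
    obtain ⟨a, -, ha⟩ := (isCompact_Icc (a := -C) (b := C)).ultrafilter_le_nhds
      (U.map (fun i => L i x)) (by
        rw [Filter.le_principal_iff]
        show ∀ᶠ i in (U : Filter (Finset G × ℕ)), L i x ∈ Set.Icc (-C) C
        exact Eventually.of_forall fun i => ⟨hL3 i x (-C) fun g => (abs_le.1 (hC g)).1, hL1 i x C fun g => (abs_le.1 (hC g)).2⟩)
    exact ⟨a, ha⟩
  choose ℓ hℓ using hex
  let ℓ' : B →ₗ[ℝ] ℝ :=
    { toFun := ℓ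
      map_add' := by
        intro x y
        refine tendsto_nhds_unique (hℓ (x + y)) ?_
        simpa using (hℓ x).add (hℓ y)
      map_smul' := by
        intro c x
        refine tendsto_nhds_unique (hℓ (c • x)) ?_
        simpa using (hℓ x).const_mul c }
  obtain ⟨m, hm⟩ := LinearMap.exists_extend ℓ'
  have hmℓ : ∀ x : B, m x.1 = ℓ x := fun x => LinearMap.congr_fun hm x
  refine ⟨m, fun x y => map_add m x y, fun c x => by simp, fun x hx => ?_⟩
  have hbb := hx.bddBelow
  have hba := hx.bddAbove
  rw [isBounded_iff_forall_norm_le] at hx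
  obtain ⟨C, hC⟩ := hx
  have hC' : ∀ g, |x g| ≤ C := fun g => hC _ ⟨g, rfl⟩
  have ht := hℓ ⟨x, C, hC'⟩
  have hmx := hmℓ ⟨x, C, hC'⟩
  refine ⟨fun γ => ?_, ?_, ?_⟩
  · have ht2 := hℓ ⟨fun h => x (h * γ), C, fun g => hC' _⟩
    have hmx2 := hmℓ ⟨fun h => x (h * γ), C, fun g => hC' _⟩
    simp only at hmx hmx2 ht ht2
    rw [hmx, hmx2]
    have hlim : Tendsto (fun i : Finset G × ℕ => (C + 1) * (1 / ((i.2 : ℝ) + 1))) U (nhds 0) := by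
      have h1 : Tendsto (fun i : Finset G × ℕ => i.2) atTop atTop := by
        rw [← prod_atTop_atTop_eq]; exact tendsto_snd
      have h2 := (tendsto_one_div_add_atTop_nhds_zero_nat (𝕜 := ℝ)).comp h1
      have h3 := (h2.const_mul (C + 1)).mono_left hU
      simpa using h3
    have hC0 : 0 ≤ C := (abs_nonneg _).trans (hC' 1)
    have hdiff : Tendsto (fun i => L i (fun h => x (h * γ)) - L i x) U (nhds 0) := by
      refine squeeze_zero_norm' ?_ hlim
      have : ∀ᶠ i : Finset G × ℕ in atTop, γ ∈ i.1 := by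
        filter_upwards [eventually_ge_atTop (({γ} : Finset G), 0)] with i hi
        exact hi.1 (by simp)
      filter_upwards [hU this] with i hi
      have h1 := hL2 i γ hi ((C + 1)⁻¹ • x) (fun g => by
        rw [Pi.smul_apply, smul_eq_mul, abs_mul, abs_of_pos (by positivity), inv_mul_le_iff₀ (by positivity)]
        linarith [hC' g])
      have h2 : (fun h => ((C + 1)⁻¹ • x) (h * γ)) = (C + 1)⁻¹ • fun h => x (h * γ) := rfl
      rw [h2, map_smul, map_smul, smul_eq_mul, smul_eq_mul, ← mul_sub, abs_mul,
        abs_of_pos (by positivity), inv_mul_le_iff₀ (by positivity)] at h1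
      exact h1
    have := tendsto_nhds_unique hdiff (ht2.sub ht)
    linarith
  · rw [hmx]
    exact ge_of_tendsto' ht fun i => hL3 i x _ fun g => csInf_le hbb ⟨g, rfl⟩
  · rw [hmx]
    exact le_of_tendsto' ht fun i => hL1 i x _ fun g => le_csSup hba ⟨g, rfl⟩

lemma almInv_comm (G : Type*) [CommGroup G] : AlmInv G := by
  intro F ε hε
  induction F using Finset.induction_on with
  | empty =>
    refine ⟨LinearMap.proj 1, fun x c hx => hx 1, fun γ hγ => by simp at hγ⟩
  | insert a F ha ih =>
    obtain ⟨L, hL1, hL2⟩ := ih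
    have hL3 : ∀ (x : G → ℝ) (c : ℝ), (∀ g, |x g| ≤ c) → |L x| ≤ c := by
      intro x c hx
      refine abs_le.2 ⟨?_, hL1 x c fun g => (abs_le.1 (hx g)).2⟩
      have := hL1 (-x) c (fun g => by have := (abs_le.1 (hx g)).1; simp; linarith)
      rw [map_neg] at this
      linarith
    obtain ⟨N, hN⟩ := exists_nat_gt (2 / ε)
    have hN0 : (0 : ℝ) < N := lt_trans (by positivity) hN
    let R : G → (G → ℝ) →ₗ[ℝ] (G → ℝ) := fun γ => LinearMap.funLeft ℝ ℝ (fun h => h * γ)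
    have hR : ∀ γ x, R γ x = fun h => x (h * γ) := fun γ x => rfl
    let L' : (G → ℝ) →ₗ[ℝ] ℝ := (N : ℝ)⁻¹ • ∑ n ∈ range N, L ∘ₗ R (a ^ n)
    have hL' : ∀ x, L' x = (N : ℝ)⁻¹ * ∑ n ∈ range N, L (fun h => x (h * a ^ n)) := by
      intro x
      simp [L', hR, LinearMap.sum_apply]
    refine ⟨L', ?_, ?_⟩
    · intro x c hx
      rw [hL', inv_mul_le_iff₀ hN0]
      calc _ ≤ ∑ n ∈ range N, c := Finset.sum_le_sum fun n _ => hL1 _ _ fun g => hx _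
        _ = _ := by simp
    · intro γ hγ x hx
      rw [hL', hL', ← mul_sub, abs_mul, abs_of_pos (by positivity), inv_mul_le_iff₀ hN0]
      rcases Finset.mem_insert.1 hγ with rfl | hγ
      · have e : ∀ n, (fun h => x (h * γ ^ n * γ)) = fun h => x (h * γ ^ (n + 1)) := by
          intro n; funext h; rw [pow_succ, mul_assoc]
        simp only [e]
        rw [← Finset.sum_sub_distrib, Finset.sum_range_sub (fun n => L (fun h => x (h * γ ^ n)))]
        have h1 := hL3 (fun h => x (h * γ ^ N)) 1 fun g => hx _
        have h2 := hL3 (fun h => x (h * γ ^ 0)) 1 fun g => hx _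
        calc _ ≤ 1 + 1 := (abs_sub _ _).trans (add_le_add h1 h2)
          _ ≤ _ := by
            rw [div_lt_iff₀ hε] at hN
            linarith
      · have e : ∀ n, (fun h => x (h * a ^ n * γ)) = fun h => (fun k => x (k * a ^ n)) (h * γ) := by
          intro n; funext h
          simp only [mul_assoc, mul_comm γ]
        simp only [e]
        rw [← Finset.sum_sub_distrib]
        calc _ ≤ ∑ n ∈ range N, ε := (Finset.abs_sum_le_sum_abs _ _).trans
              (Finset.sum_le_sum fun n _ => hL2 γ hγ (fun k => x (k * a ^ n)) fun g => hx _)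
          _ = _ := by simp

end

end GE

namespace GE

open Finset

noncomputable section

set_option linter.unusedSectionVars false

attribute [local instance] Classical.propDecidable

/-- finite support -/
def FS {G : Type*} (f : G → ℝ) : Prop := (Function.support f).Finite

section FSlemmas

variable {G : Type*} {f h : G → ℝ}

lemma FS.summable (hf : FS f) : Summable f := summable_of_hasFiniteSupport hf

lemma FS.mono (hf : FS f) (hz : ∀ g, f g = 0 → h g = 0) : FS h :=
  Set.Finite.subset hf fun g hg hf0 => hg (hz g hf0)

lemma FS.add (hf : FS f) (hh : FS h) : FS fun g => f g + h g :=
  (Set.Finite.union hf hh).subset (Function.support_add f h)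

lemma FS.sub (hf : FS f) (hh : FS h) : FS fun g => f g - h g :=
  (Set.Finite.union hf hh).subset (Function.support_sub f h)

lemma FS.sq (hf : FS f) : FS fun g => f g ^ 2 := hf.mono fun g hg => by simp [hg]

lemma FS.mul (hf : FS f) (h : G → ℝ) : FS fun g => f g * h g := hf.mono fun g hg => by simp [hg]

lemma FS.const_mul (hf : FS f) (c : ℝ) : FS fun g => c * f g := hf.mono fun g hg => by simp [hg]

lemma FS.sum {ι : Type*} (s : Finset ι) {F : ι → G → ℝ} (hF : ∀ i, FS (F i)) :
    FS fun g => ∑ i ∈ s, F i g := by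
  induction s using Finset.induction_on with
  | empty => simp [FS, Function.support]
  | insert a s ha ih =>
    simp only [Finset.sum_insert ha]
    exact (hF a).add ih

lemma FS.right [Group G] (hf : FS f) (γ : G) : FS fun g => f (g * γ) := by
  have : Function.support (fun g => f (g * γ)) ⊆ (fun g => g * γ⁻¹) '' Function.support f := by
    intro g hg
    exact ⟨g * γ, hg, by simp⟩
  exact (Set.Finite.image _ hf).subset this

lemma tsum_right [Group G] (f : G → ℝ) (γ : G) : ∑' g, f (g * γ) = ∑' g, f g :=
  (Equiv.mulRight γ).tsum_eq f

end FSlemmas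

variable {S : Type*} [Fintype S] {G : Type*} [Group G]

/-- the transition operator -/
def Pop (c : S → S → ℝ) (π : S → ℝ) (φ : S → S → G) (f : S → G → ℝ) (s : S) (g : G) : ℝ :=
  ∑ t, c s t / π s * f t (g * φ s t)

/-- weighted square norm -/
def nrm (π : S → ℝ) (f : S → G → ℝ) : ℝ := ∑ s, π s * ∑' g, f s g ^ 2

variable {c : S → S → ℝ} {π : S → ℝ} {φ : S → S → G} {f : S → G → ℝ}

lemma Pop_FS (hf : ∀ s, FS (f s)) (s : S) : FS (Pop c π φ f s) :=
  FS.sum _ fun t => ((hf t).right (φ s t)).const_mul _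

lemma nrm_contr (hc : ∀ s t, 0 ≤ c s t) (hπ : ∀ s, 0 < π s) (hrow : ∀ s, ∑ t, c s t ≤ π s)
    (hcol : ∀ t, ∑ s, c s t ≤ π t) (hf : ∀ s, FS (f s)) :
    nrm π (Pop c π φ f) ≤ nrm π f := by
  have key : ∀ s, π s * ∑' g, (Pop c π φ f s g) ^ 2 ≤ ∑ t, c s t * ∑' g, f t g ^ 2 := by
    intro s
    have hp : ∀ g, (Pop c π φ f s g) ^ 2 ≤ ∑ t, c s t / π s * f t (g * φ s t) ^ 2 := by
      intro g
      have h1 := Finset.sum_sq_le_sum_mul_sum_of_sq_le_mul (univ : Finset S)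
        (r := fun t => c s t / π s * f t (g * φ s t))
        (f := fun t => c s t / π s) (g := fun t => c s t / π s * f t (g * φ s t) ^ 2)
        (fun t _ => div_nonneg (hc s t) (hπ s).le)
        (fun t _ => mul_nonneg (div_nonneg (hc s t) (hπ s).le) (sq_nonneg _))
        (fun t _ => le_of_eq (by ring))
      refine h1.trans (mul_le_of_le_one_left ?_ ?_)
      · exact Finset.sum_nonneg fun t _ => mul_nonneg (div_nonneg (hc s t) (hπ s).le) (sq_nonneg _)
      · rw [← Finset.sum_div]
        exact (div_le_one (hπ s)).2 (hrow s)
    have hfs : ∀ t, FS fun g => c s t / π s * f t (g * φ s t) ^ 2 := fun t =>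
      (((hf t).sq).right (φ s t)).const_mul _
    calc π s * ∑' g, (Pop c π φ f s g) ^ 2
        ≤ π s * ∑' g, ∑ t, c s t / π s * f t (g * φ s t) ^ 2 := by
          refine mul_le_mul_of_nonneg_left ?_ (hπ s).le
          exact Summable.tsum_le_tsum hp (Pop_FS hf s).sq.summable (FS.sum _ hfs).summable
      _ = ∑ t, c s t * ∑' g, f t g ^ 2 := by
          rw [Summable.tsum_finsetSum fun t _ => (hfs t).summable, Finset.mul_sum]
          refine Finset.sum_congr rfl fun t _ => ?_
          rw [tsum_mul_left, tsum_right (fun g => f t g ^ 2), ← mul_assoc,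
            mul_div_cancel₀ _ (hπ s).ne']
  calc nrm π (Pop c π φ f) ≤ ∑ s, ∑ t, c s t * ∑' g, f t g ^ 2 :=
        Finset.sum_le_sum fun s _ => key s
    _ = ∑ t, (∑ s, c s t) * ∑' g, f t g ^ 2 := by
        rw [Finset.sum_comm]
        exact Finset.sum_congr rfl fun t _ => by rw [Finset.sum_mul]
    _ ≤ _ := Finset.sum_le_sum fun t _ =>
        mul_le_mul_of_nonneg_right (hcol t) (tsum_nonneg fun g => sq_nonneg _)

lemma energy (hc : ∀ s t, 0 ≤ c s t) (hπ : ∀ s, 0 < π s) (hrow : ∀ s, ∑ t, c s t ≤ π s)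
    (hcol : ∀ t, ∑ s, c s t ≤ π t) (hf : ∀ s, FS (f s)) {ε : ℝ} (hε : 0 < ε) :
    ∑ s, ∑ t, c s t * ∑' g, (f s g - f t (g * φ s t)) ^ 2 ≤
      ε * nrm π f + ε⁻¹ * nrm π (fun s g => f s g - Pop c π φ f s g) := by
  have hF : ∀ s, 0 ≤ ∑' g, f s g ^ 2 := fun s => tsum_nonneg fun g => sq_nonneg _
  have e1 : ∀ s t, ∑' g, (f s g - f t (g * φ s t)) ^ 2 =
      ∑' g, f s g ^ 2 + ∑' g, f t g ^ 2 - 2 * ∑' g, f s g * f t (g * φ s t) := by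
    intro s t
    have h1 := (hf s).sq.summable
    have h2 := ((hf t).sq.right (φ s t)).summable
    have h3 := ((hf s).mul (fun g => f t (g * φ s t))).summable
    rw [← tsum_right (fun g => f t g ^ 2) (φ s t), ← h1.tsum_add h2, ← tsum_mul_left,
      ← (h1.add h2).tsum_sub (h3.mul_left 2)]
    exact tsum_congr fun g => by ring
  have e2 : ∀ s, ∑ t, c s t * ∑' g, f s g * f t (g * φ s t) =
      π s * ∑' g, f s g * Pop c π φ f s g := by
    intro s
    have hfs : ∀ t, FS fun g => c s t / π s * (f s g * f t (g * φ s t)) := fun t =>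
      ((hf s).mul _).const_mul _
    have : ∀ g, f s g * Pop c π φ f s g = ∑ t, c s t / π s * (f s g * f t (g * φ s t)) := by
      intro g
      rw [Pop, Finset.mul_sum]
      exact Finset.sum_congr rfl fun t _ => by ring
    simp only [this]
    rw [Summable.tsum_finsetSum fun t _ => (hfs t).summable, Finset.mul_sum]
    refine Finset.sum_congr rfl fun t _ => ?_
    rw [tsum_mul_left, ← mul_assoc, mul_div_cancel₀ _ (hπ s).ne']
  have e3 : ∀ s, 2 * ∑' g, f s g ^ 2 - 2 * ∑' g, f s g * Pop c π φ f s g ≤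
      ε * ∑' g, f s g ^ 2 + ε⁻¹ * ∑' g, (f s g - Pop c π φ f s g) ^ 2 := by
    intro s
    have h1 := (hf s).sq.summable
    have h3 := ((hf s).mul (Pop c π φ f s)).summable
    have h4 := ((hf s).sub (Pop_FS (c := c) (π := π) (φ := φ) hf s)).sq.summable
    rw [← tsum_mul_left, ← tsum_mul_left, ← tsum_mul_left, ← tsum_mul_left,
      ← (h1.mul_left 2).tsum_sub (h3.mul_left 2), ← (h1.mul_left ε).tsum_add (h4.mul_left ε⁻¹)]
    refine Summable.tsum_le_tsum (fun g => ?_) ((h1.mul_left 2).sub (h3.mul_left 2))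
      ((h1.mul_left ε).add (h4.mul_left ε⁻¹))
    set a := f s g
    set b := Pop c π φ f s g
    have : ε * a ^ 2 + ε⁻¹ * (a - b) ^ 2 - (2 * a ^ 2 - 2 * (a * b)) = ε⁻¹ * (ε * a - (a - b)) ^ 2 := by
      field_simp
      ring
    have h5 : 0 ≤ ε⁻¹ * (ε * a - (a - b)) ^ 2 := by positivity
    linarith
  calc _ = ∑ s, (∑ t, c s t) * ∑' g, f s g ^ 2 + ∑ t, (∑ s, c s t) * ∑' g, f t g ^ 2
        - 2 * ∑ s, π s * ∑' g, f s g * Pop c π φ f s g := by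
        simp only [e1, ← e2, Finset.sum_mul, Finset.mul_sum]
        rw [Finset.sum_comm (f := fun t s => c s t * ∑' g, f t g ^ 2), ← Finset.sum_add_distrib,
          ← Finset.sum_sub_distrib]
        refine Finset.sum_congr rfl fun s _ => ?_
        rw [← Finset.sum_add_distrib, ← Finset.sum_sub_distrib]
        exact Finset.sum_congr rfl fun t _ => by ring
    _ ≤ ∑ s, π s * ∑' g, f s g ^ 2 + ∑ t, π t * ∑' g, f t g ^ 2
        - 2 * ∑ s, π s * ∑' g, f s g * Pop c π φ f s g := by
        gcongr
        · exact hrow _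
        · exact hcol _
    _ = ∑ s, π s * (2 * ∑' g, f s g ^ 2 - 2 * ∑' g, f s g * Pop c π φ f s g) := by
        rw [Finset.mul_sum, ← Finset.sum_add_distrib, ← Finset.sum_sub_distrib]
        exact Finset.sum_congr rfl fun t _ => by ring
    _ ≤ ∑ s, π s * (ε * ∑' g, f s g ^ 2 + ε⁻¹ * ∑' g, (f s g - Pop c π φ f s g) ^ 2) :=
        Finset.sum_le_sum fun s _ => mul_le_mul_of_nonneg_left (e3 s) (hπ s).le
    _ = _ := by
        rw [nrm, nrm, Finset.mul_sum, Finset.mul_sum, ← Finset.sum_add_distrib]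
        exact Finset.sum_congr rfl fun t _ => by ring

lemma sum_sq_le (s : Finset ℕ) (x : ℕ → ℝ) (hx : ∀ i, 0 ≤ x i) :
    ∑ i ∈ s, x i ^ 2 ≤ (∑ i ∈ s, x i) ^ 2 := by
  induction s using Finset.induction_on with
  | empty => simp
  | insert a s ha ih =>
    rw [Finset.sum_insert ha, Finset.sum_insert ha]
    have := Finset.sum_nonneg fun i (_ : i ∈ s) => hx i
    nlinarith [hx a, mul_nonneg (hx a) this]

lemma window (hc : ∀ s t, 0 ≤ c s t) (hπ : ∀ s, 0 < π s) (hrow : ∀ s, ∑ t, c s t ≤ π s)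
    (hcol : ∀ t, ∑ s, c s t ≤ π t) (u : ℕ → S → G → ℝ) (hu0 : ∀ n s g, 0 ≤ u n s g)
    (hu : ∀ n s, FS (u n s)) (hP : ∀ n s g, Pop c π φ (u n) s g = u (n + 1) s g)
    {ε : ℝ} (hε : 0 < ε) (m N : ℕ) (hm : 4 ≤ ε ^ 2 * m)
    (hN : nrm π (u N) ≤ 2 * nrm π (u (N + m))) (hpos : 0 < nrm π (u (N + m))) :
    ∃ f : S → G → ℝ, (∀ s, FS (f s)) ∧ 0 < nrm π f ∧
      ∑ s, ∑ t, c s t * ∑' g, (f s g - f t (g * φ s t)) ^ 2 ≤ 2 * ε * nrm π f := by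
  have hm0 : 0 < m := by
    rcases Nat.eq_zero_or_pos m with rfl | h
    · norm_num at hm
    · exact h
  have hm0' : (0 : ℝ) < m := by exact_mod_cast hm0
  have hmono : ∀ n k, nrm π (u (n + k)) ≤ nrm π (u n) := by
    intro n k
    induction k with
    | zero => exact le_rfl
    | succ k ih =>
      refine le_trans ?_ ih
      have := nrm_contr (φ := φ) hc hπ hrow hcol (hu (n + k))
      have e : Pop c π φ (u (n + k)) = u (n + k + 1) := by
        funext s g; exact hP _ _ _
      rwa [e] at this
  let f : S → G → ℝ := fun s g => ∑ i ∈ range m, u (N + i) s g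
  have hf : ∀ s, FS (f s) := fun s => FS.sum _ fun i => hu _ _
  have hPf : ∀ s g, f s g - Pop c π φ f s g = u N s g - u (N + m) s g := by
    intro s g
    have h1 : Pop c π φ f s g = ∑ i ∈ range m, u (N + (i + 1)) s g := by
      have : ∀ i, u (N + (i + 1)) s g = Pop c π φ (u (N + i)) s g := fun i => (hP _ _ _).symm
      simp only [this, Pop, f, Finset.mul_sum]
      rw [Finset.sum_comm]
    rw [h1]
    simp only [f]
    have := Finset.sum_range_sub' (fun i => u (N + i) s g) m
    rw [Finset.sum_sub_distrib] at this
    simpa using this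
  have hnf : m * nrm π (u (N + m)) ≤ nrm π f := by
    calc m * nrm π (u (N + m)) = ∑ i ∈ range m, nrm π (u (N + m)) := by simp
      _ ≤ ∑ i ∈ range m, nrm π (u (N + i)) := by
          refine Finset.sum_le_sum fun i hi => ?_
          have h1 := Finset.mem_range.1 hi
          have := hmono (N + i) (m - i)
          rwa [show N + i + (m - i) = N + m by omega] at this
      _ = ∑ s, π s * ∑ i ∈ range m, ∑' g, u (N + i) s g ^ 2 := by
          simp only [nrm, Finset.mul_sum]
          rw [Finset.sum_comm]
      _ ≤ _ := by
          refine Finset.sum_le_sum fun s _ => mul_le_mul_of_nonneg_left ?_ (hπ s).le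
          rw [← Summable.tsum_finsetSum fun i _ => (hu (N + i) s).sq.summable]
          exact Summable.tsum_le_tsum (fun g => sum_sq_le _ _ fun i => hu0 _ _ _)
            (FS.sum _ fun i => (hu (N + i) s).sq).summable (hf s).sq.summable
  have hnd : nrm π (fun s g => f s g - Pop c π φ f s g) ≤ 2 * nrm π (u N) := by
    have h2 : nrm π (fun s g => f s g - Pop c π φ f s g) ≤ nrm π (u N) + nrm π (u (N + m)) := by
      simp only [hPf, nrm]
      rw [← Finset.sum_add_distrib]
      refine Finset.sum_le_sum fun s _ => ?_
      rw [← mul_add]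
      refine mul_le_mul_of_nonneg_left ?_ (hπ s).le
      have h3 := (hu N s).sq.summable
      have h4 := (hu (N + m) s).sq.summable
      rw [← h3.tsum_add h4]
      refine Summable.tsum_le_tsum (fun g => ?_) ((hu N s).sub (hu (N + m) s)).sq.summable
        (h3.add h4)
      nlinarith [mul_nonneg (hu0 N s g) (hu0 (N + m) s g)]
    linarith [hmono N m]
  refine ⟨f, hf, lt_of_lt_of_le (by positivity) hnf, ?_⟩
  refine (energy hc hπ hrow hcol hf hε).trans ?_
  have h5 : ε⁻¹ * nrm π (fun s g => f s g - Pop c π φ f s g) ≤ ε * nrm π f := by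
    rw [inv_mul_le_iff₀ hε]
    calc _ ≤ 4 * nrm π (u (N + m)) := by linarith
      _ ≤ (ε ^ 2 * m) * nrm π (u (N + m)) := mul_le_mul_of_nonneg_right hm hpos.le
      _ = ε ^ 2 * (m * nrm π (u (N + m))) := by ring
      _ ≤ ε ^ 2 * nrm π f := mul_le_mul_of_nonneg_left hnf (by positivity)
      _ = _ := by ring
  linarith

end

end GE

namespace GE

open Finset

noncomputable section

set_option linter.unusedSectionVars false

attribute [local instance] Classical.propDecidable

variable {S : Type*} [Fintype S] {G : Type*} [Group G]
variable {A : S → S → Bool} {φ : S → S → G}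

lemma chain_bound {f : S → G → ℝ} (hf : ∀ s, FS (f s)) {Q : ℝ} (hQ : 0 ≤ Q)
    (hE : ∀ s t, A s t = true → ∑' g, (f s g - f t (g * φ s t)) ^ 2 ≤ Q)
    (n : ℕ) (s t : S) (γ : G) (hW : 0 < W A φ n s t γ) :
    ∑' g, (f s g - f t (g * γ)) ^ 2 ≤ 4 ^ n * Q := by
  induction n generalizing s γ with
  | zero =>
    simp only [W] at hW
    by_cases h : s = t ∧ γ = 1
    · obtain ⟨rfl, rfl⟩ := h
      simpa using hQ
    · simp [h] at hW
  | succ n ih =>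
    obtain ⟨u, hu, hp⟩ := W_succ_pos hW
    have h1 := hE s u hu
    have h2 := ih u _ hp
    rw [← tsum_right _ (φ s u)] at h2
    have s1 := ((hf s).sub ((hf u).right (φ s u))).sq.summable
    have s2 := (((hf u).sub ((hf t).right ((φ s u)⁻¹ * γ))).right (φ s u)).sq.summable
    have s3 := ((hf s).sub ((hf t).right γ)).sq.summable
    calc ∑' g, (f s g - f t (g * γ)) ^ 2
        ≤ ∑' g, (2 * (f s g - f u (g * φ s u)) ^ 2 +
          2 * (f u (g * φ s u) - f t (g * φ s u * ((φ s u)⁻¹ * γ))) ^ 2) := by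
          refine Summable.tsum_le_tsum (fun g => ?_) s3 ((s1.mul_left 2).add (s2.mul_left 2))
          rw [show g * φ s u * ((φ s u)⁻¹ * γ) = g * γ by group]
          nlinarith [sq_nonneg ((f s g - f u (g * φ s u)) - (f u (g * φ s u) - f t (g * γ)))]
      _ ≤ 2 * Q + 2 * (4 ^ n * Q) := by
          rw [(s1.mul_left 2).tsum_add (s2.mul_left 2), tsum_mul_left, tsum_mul_left]
          linarith
      _ ≤ _ := by
          have : (1 : ℝ) ≤ 4 ^ n := one_le_pow₀ (by norm_num)
          rw [pow_succ]
          nlinarith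

lemma almInv_of_star (hirr : Irr A φ)
    (hstar : ∀ η : ℝ, 0 < η → ∃ f : S → G → ℝ, (∀ s, FS (f s)) ∧ 0 < ∑ s, ∑' g, f s g ^ 2 ∧
      ∀ s t, A s t = true →
        ∑' g, (f s g - f t (g * φ s t)) ^ 2 ≤ η * ∑ s, ∑' g, f s g ^ 2) : AlmInv G := by
  intro F ε hε
  choose k _ hk using hirr
  let K : ℕ := ∑ γ ∈ F, ∑ s, k s s γ
  have hK : ∀ γ ∈ F, ∀ s, k s s γ ≤ K := by
    intro γ hγ s
    calc k s s γ ≤ ∑ s, k s s γ :=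
          Finset.single_le_sum (f := fun s => k s s γ) (fun _ _ => Nat.zero_le _) (mem_univ s)
      _ ≤ K := Finset.single_le_sum (f := fun γ => ∑ s, k s s γ) (fun _ _ => Nat.zero_le _) hγ
  let δ : ℝ := ε / 4
  have hδ : 0 < δ := by positivity
  let c : ℝ := Fintype.card S + 1
  have hc : 0 < c := by positivity
  obtain ⟨f, hf, hpos, hE⟩ := hstar (ε * δ / (c * 4 ^ K)) (by positivity)
  set Z := ∑ s, ∑' g, f s g ^ 2 with hZ
  let Lf : (G → ℝ) → ℝ := fun x => Z⁻¹ * ∑ s, ∑' g, f s g ^ 2 * x g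
  have hsm : ∀ s (x : G → ℝ), Summable fun g => f s g ^ 2 * x g := fun s x =>
    ((hf s).sq.mul x).summable
  let L : (G → ℝ) →ₗ[ℝ] ℝ :=
    { toFun := Lf
      map_add' := by
        intro x y
        simp only [Lf, Pi.add_apply, mul_add]
        rw [← mul_add, ← Finset.sum_add_distrib]
        congr 1
        exact Finset.sum_congr rfl fun s _ => (hsm s x).tsum_add (hsm s y)
      map_smul' := by
        intro a x
        simp only [Lf, Pi.smul_apply, smul_eq_mul, RingHom.id_apply]
        rw [mul_left_comm a, Finset.mul_sum (a := a)]
        congr 1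
        refine Finset.sum_congr rfl fun s _ => ?_
        rw [← tsum_mul_left]
        exact tsum_congr fun g => by ring }
  refine ⟨L, ?_, ?_⟩
  · intro x b hx
    show Z⁻¹ * ∑ s, ∑' g, f s g ^ 2 * x g ≤ b
    rw [inv_mul_le_iff₀ hpos, hZ, Finset.sum_mul]
    refine Finset.sum_le_sum fun s _ => ?_
    rw [← tsum_mul_right]
    exact Summable.tsum_le_tsum (fun g => mul_le_mul_of_nonneg_left (hx g) (sq_nonneg _))
      (hsm s x) ((hf s).sq.summable.mul_right b)
  · intro γ hγ x hx
    show |Z⁻¹ * ∑ s, ∑' g, f s g ^ 2 * x (g * γ) - Z⁻¹ * ∑ s, ∑' g, f s g ^ 2 * x g| ≤ ε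
    rw [← mul_sub, abs_mul, abs_of_pos (inv_pos.2 hpos), inv_mul_le_iff₀ hpos,
      ← Finset.sum_sub_distrib]
    have key : ∀ s, |∑' g, f s g ^ 2 * x (g * γ) - ∑' g, f s g ^ 2 * x g| ≤
        (2 * δ)⁻¹ * (4 ^ K * (ε * δ / (c * 4 ^ K) * Z)) + 2 * δ * ∑' g, f s g ^ 2 := by
      intro s
      have s1 := (hf s).sq
      have s2 := (hf s).sq.right γ
      have s3 := ((hf s).sub ((hf s).right γ)).sq
      have hch := chain_bound hf (by positivity) hE (k s s γ) s s γ (hk s s γ)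
      have hch' : ∑' g, (f s g - f s (g * γ)) ^ 2 ≤ 4 ^ K * (ε * δ / (c * 4 ^ K) * Z) := by
        refine hch.trans ?_
        refine mul_le_mul_of_nonneg_right ?_ (by positivity)
        exact pow_le_pow_right₀ (by norm_num) (hK γ hγ s)
      rw [← tsum_right (fun g => f s g ^ 2 * x g) γ,
        ← (hsm s fun g => x (g * γ)).tsum_sub (s2.mul fun g => x (g * γ)).summable]
      have s4 : FS fun g => f s g ^ 2 * x (g * γ) - f s (g * γ) ^ 2 * x (g * γ) :=
        (s1.mul _).sub (s2.mul _)
      have s5 : Summable fun g => ‖f s g ^ 2 * x (g * γ) - f s (g * γ) ^ 2 * x (g * γ)‖ :=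
        (s4.mono (h := fun g => ‖f s g ^ 2 * x (g * γ) - f s (g * γ) ^ 2 * x (g * γ)‖)
          fun g hg => by simp only [hg, norm_zero]).summable
      have s6 : Summable fun g => (2 * δ)⁻¹ * (f s g - f s (g * γ)) ^ 2 +
          δ * (f s g ^ 2 + f s (g * γ) ^ 2) :=
        (s3.summable.mul_left _).add ((s1.summable.add s2.summable).mul_left _)
      calc |∑' g, (f s g ^ 2 * x (g * γ) - f s (g * γ) ^ 2 * x (g * γ))|
          ≤ ∑' g, ‖f s g ^ 2 * x (g * γ) - f s (g * γ) ^ 2 * x (g * γ)‖ :=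
            norm_tsum_le_tsum_norm s5
        _ ≤ ∑' g, ((2 * δ)⁻¹ * (f s g - f s (g * γ)) ^ 2 +
            δ * (f s g ^ 2 + f s (g * γ) ^ 2)) := by
            refine Summable.tsum_le_tsum (fun g => ?_) s5 s6
            rw [← sub_mul, norm_mul]
            set a := f s g
            set b := f s (g * γ)
            have h1 : ‖x (g * γ)‖ ≤ 1 := hx _
            have h2 : (0 : ℝ) ≤ ‖a ^ 2 - b ^ 2‖ := norm_nonneg _
            have h3 : ‖a ^ 2 - b ^ 2‖ ≤ (2 * δ)⁻¹ * (a - b) ^ 2 + δ * (a ^ 2 + b ^ 2) := by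
              have h5 : (2 * δ)⁻¹ * (a - b) ^ 2 + δ * (a ^ 2 + b ^ 2) - (a ^ 2 - b ^ 2) =
                  (2 * δ)⁻¹ * ((a - b) - δ * (a + b)) ^ 2 + δ / 2 * (a - b) ^ 2 := by
                field_simp
                ring
              have h6 : (2 * δ)⁻¹ * (a - b) ^ 2 + δ * (a ^ 2 + b ^ 2) + (a ^ 2 - b ^ 2) =
                  (2 * δ)⁻¹ * ((a - b) + δ * (a + b)) ^ 2 + δ / 2 * (a - b) ^ 2 := by
                field_simp
                ring
              have h7 : 0 ≤ (2 * δ)⁻¹ * ((a - b) - δ * (a + b)) ^ 2 + δ / 2 * (a - b) ^ 2 := by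
                positivity
              have h8 : 0 ≤ (2 * δ)⁻¹ * ((a - b) + δ * (a + b)) ^ 2 + δ / 2 * (a - b) ^ 2 := by
                positivity
              rw [Real.norm_eq_abs, abs_le]
              constructor <;> linarith
            nlinarith
        _ = (2 * δ)⁻¹ * ∑' g, (f s g - f s (g * γ)) ^ 2 + 2 * δ * ∑' g, f s g ^ 2 := by
            rw [(s3.summable.mul_left _).tsum_add ((s1.summable.add s2.summable).mul_left _),
              tsum_mul_left, tsum_mul_left, s1.summable.tsum_add s2.summable,
              tsum_right (fun g => f s g ^ 2)]
            ring
        _ ≤ _ := by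
            have : 0 ≤ (2 * δ)⁻¹ := by positivity
            gcongr
    calc _ ≤ ∑ s, |∑' g, f s g ^ 2 * x (g * γ) - ∑' g, f s g ^ 2 * x g| :=
          Finset.abs_sum_le_sum_abs _ _
      _ ≤ ∑ s, ((2 * δ)⁻¹ * (4 ^ K * (ε * δ / (c * 4 ^ K) * Z)) + 2 * δ * ∑' g, f s g ^ 2) :=
          Finset.sum_le_sum fun s _ => key s
      _ = Fintype.card S * (ε / 2 / c * Z) + 2 * δ * Z := by
          rw [Finset.sum_add_distrib]
          congr 1
          · simp only [Finset.sum_const, nsmul_eq_mul, Finset.card_univ]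
            congr 1
            field_simp
          · rw [hZ, Finset.mul_sum]
      _ ≤ c * (ε / 2 / c * Z) + 2 * δ * Z := by
          have : (Fintype.card S : ℝ) ≤ c := by simp [c]
          gcongr
      _ = Z * ε := by
          simp only [δ]
          field_simp
          ring

/-- left subinvariant vector -/
lemma left_vec {E : S → S → ℝ} (hE : ∀ s t, 0 < E s t) {v : S → ℝ} (hv : ∀ s, 0 < v s)
    {r R : ℝ} (hr : 0 < r) (hrR : r < R)
    (hM : ∀ s, ∑ u : S, (if A s u = true then E s u * v u else 0) ≤ r * v s)
    (hirr : Irr A φ) (s0 : S) :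
    ∃ w : S → ℝ, (∀ s, 0 < w s) ∧
      ∀ t, ∑ s : S, (if A s t = true then w s * E s t else 0) ≤ R * w t := by
  have hR : 0 < R := hr.trans hrR
  let M : Matrix S S ℝ := fun s t => if A s t = true then E s t else 0
  have hM0 : ∀ s t, 0 ≤ M s t := by
    intro s t
    simp only [M]
    split_ifs
    · exact (hE s t).le
    · exact le_rfl
  have hMn0 : ∀ n s t, 0 ≤ (M ^ n) s t := by
    intro n
    induction n with
    | zero => intro s t; rw [pow_zero, Matrix.one_apply]; split_ifs <;> norm_num
    | succ n ih =>
      intro s t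
      rw [pow_succ', Matrix.mul_apply]
      exact Finset.sum_nonneg fun u _ => mul_nonneg (hM0 _ _) (ih _ _)
  have hb : ∀ n s t, (M ^ n) s t * v t ≤ r ^ n * v s := by
    intro n
    induction n with
    | zero =>
      intro s t
      rw [pow_zero, Matrix.one_apply]
      split_ifs with h
      · subst h; simp
      · simp [(hv s).le]
    | succ n ih =>
      intro s t
      rw [pow_succ', Matrix.mul_apply, Finset.sum_mul]
      calc _ ≤ ∑ u, r ^ n * (if A s u = true then E s u * v u else 0) := by
            refine Finset.sum_le_sum fun u _ => ?_
            have := mul_le_mul_of_nonneg_left (ih u t) (hM0 s u)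
            rw [mul_assoc]
            refine this.trans (le_of_eq ?_)
            simp only [M]
            split_ifs <;> ring
        _ ≤ r ^ n * (r * v s) := by
            rw [← Finset.mul_sum]
            exact mul_le_mul_of_nonneg_left (hM s) (by positivity)
        _ = _ := by ring
  have hpos : ∀ n s t g, 0 < W A φ n s t g → 0 < (M ^ n) s t := by
    intro n
    induction n with
    | zero =>
      intro s t g h
      simp only [W] at h
      by_cases h' : s = t ∧ g = 1
      · simp [h'.1]
      · simp [h'] at h
    | succ n ih =>
      intro s t g h
      obtain ⟨u, hu, hp⟩ := W_succ_pos h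
      rw [pow_succ', Matrix.mul_apply]
      refine Finset.sum_pos' (fun u _ => mul_nonneg (hM0 _ _) (hMn0 _ _ _)) ⟨u, mem_univ _, ?_⟩
      refine mul_pos ?_ (ih _ _ _ hp)
      simp [M, hu, hE]
  have hs : ∀ t, Summable fun n : ℕ => (M ^ n) s0 t / R ^ n := by
    intro t
    have hgeo : Summable fun n : ℕ => v s0 / v t * (r / R) ^ n :=
      (summable_geometric_of_lt_one (by positivity) ((div_lt_one hR).2 hrR)).mul_left _
    refine Summable.of_nonneg_of_le (fun n => div_nonneg (hMn0 _ _ _) (by positivity))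
      (fun n => ?_) hgeo
    rw [div_pow, div_mul_div_comm, div_le_div_iff₀ (by positivity) (mul_pos (hv t) (by positivity))]
    calc (M ^ n) s0 t * (v t * R ^ n) = ((M ^ n) s0 t * v t) * R ^ n := by ring
      _ ≤ (r ^ n * v s0) * R ^ n := mul_le_mul_of_nonneg_right (hb n s0 t) (by positivity)
      _ = _ := by ring
  refine ⟨fun t => ∑' n : ℕ, (M ^ n) s0 t / R ^ n, fun t => ?_, fun t => ?_⟩
  · obtain ⟨k, -, hk⟩ := hirr s0 t 1
    exact (hs t).tsum_pos (fun n => div_nonneg (hMn0 _ _ _) (by positivity)) k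
      (div_pos (hpos _ _ _ _ hk) (by positivity))
  · calc _ = ∑ s, ∑' n : ℕ, (M ^ n) s0 s / R ^ n * M s t := by
          refine Finset.sum_congr rfl fun s _ => ?_
          rw [tsum_mul_right]
          simp only [M]
          split_ifs <;> ring
      _ = ∑' n : ℕ, ∑ s, (M ^ n) s0 s / R ^ n * M s t :=
          (Summable.tsum_finsetSum fun s _ => (hs s).mul_right _).symm
      _ = ∑' n : ℕ, R * ((M ^ (n + 1)) s0 t / R ^ (n + 1)) := by
          refine tsum_congr fun n => ?_
          rw [pow_succ M, Matrix.mul_apply, pow_succ' R, mul_div_assoc',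
            mul_div_mul_left _ _ hR.ne', Finset.sum_div]
          exact Finset.sum_congr rfl fun s _ => by ring
      _ = R * ∑' n : ℕ, (M ^ (n + 1)) s0 t / R ^ (n + 1) := tsum_mul_left
      _ ≤ _ := by
          refine mul_le_mul_of_nonneg_left ?_ hR.le
          show ∑' n : ℕ, (M ^ (n + 1)) s0 t / R ^ (n + 1) ≤ ∑' n : ℕ, (M ^ n) s0 t / R ^ n
          rw [(hs t).tsum_eq_zero_add]
          have : 0 ≤ (M ^ 0) s0 t / R ^ 0 := div_nonneg (hMn0 _ _ _) (by positivity)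
          linarith

end

end GE


namespace GE

open Finset

noncomputable section

set_option linter.unusedSectionVars false

attribute [local instance] Classical.propDecidable

variable {S : Type*} [Fintype S] {G : Type*} [Group G]
variable {A : S → S → Bool} {φ : S → S → G}

lemma decay {b : ℕ → ℝ} (hb : ∀ n, 0 ≤ b n) {m : ℕ} (hm : 0 < m) {τ : ℝ} (hτ0 : 0 < τ)
    (hτ : 1 / 2 ≤ τ ^ m) (H : ∀ N, b (N + m) ≤ b N / 2) :
    ∃ C : ℝ, 0 ≤ C ∧ ∀ n, b n ≤ C * τ ^ n := by
  refine ⟨∑ i ∈ range m, b i / τ ^ i,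
    Finset.sum_nonneg fun i _ => div_nonneg (hb i) (by positivity), fun n => ?_⟩
  induction n using Nat.strong_induction_on with
  | _ n ih =>
    by_cases hn : n < m
    · rw [← div_le_iff₀ (by positivity)]
      exact Finset.single_le_sum (f := fun i => b i / τ ^ i)
        (fun i _ => div_nonneg (hb i) (by positivity)) (mem_range.2 hn)
    · obtain ⟨N, rfl⟩ : ∃ N, n = N + m := ⟨n - m, by omega⟩
      have h1 := ih N (by omega)
      have h2 := H N
      have h3 : b N * (1 / 2) ≤ b N * τ ^ m := mul_le_mul_of_nonneg_left hτ (hb N)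
      have h4 := mul_le_mul_of_nonneg_right h1 (by positivity : 0 ≤ τ ^ m)
      rw [pow_add, ← mul_assoc]
      linarith

lemma star_aux {χ : G → ℝ} (hχ : ∀ a b, χ (a * b) = χ a + χ b) {v w : S → ℝ}
    (hv : ∀ s, 0 < v s) (hw : ∀ s, 0 < w s) {R : ℝ} (hR : 0 < R)
    (hM : ∀ s, ∑ u : S, (if A s u = true then Real.exp (χ (φ s u)) * v u else 0) ≤ R * v s)
    (hL : ∀ t, ∑ s : S, (if A s t = true then w s * Real.exp (χ (φ s t)) else 0) ≤ R * w t)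
    (s0 : S) {m : ℕ} (hm : 0 < m) {τ : ℝ} (hτ0 : 0 < τ) (hτ : 1 / 2 ≤ (τ ^ 2) ^ m)
    (H : ∀ C : ℝ, ¬ ∀ n, (W A φ n s0 s0 1 : ℝ) ≤ C * (R * τ) ^ n)
    {ε : ℝ} (hε : 0 < ε) (hεm : 4 ≤ ε ^ 2 * m) :
    ∃ f : S → G → ℝ, (∀ s, FS (f s)) ∧ 0 < ∑ s, w s * v s * ∑' g, f s g ^ 2 ∧
      ∑ s, ∑ t, (if A s t = true then w s * Real.exp (χ (φ s t)) * v t / R else 0) *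
        ∑' g, (f s g - f t (g * φ s t)) ^ 2 ≤
        2 * ε * ∑ s, w s * v s * ∑' g, f s g ^ 2 := by
  have h1 : χ 1 = 0 := by have := hχ 1 1; simp at this; exact this
  let c : S → S → ℝ := fun s t => if A s t = true then w s * Real.exp (χ (φ s t)) * v t / R else 0
  let π : S → ℝ := fun s => w s * v s
  let u : ℕ → S → G → ℝ := fun n s g =>
    (W A φ n s s0 g⁻¹ : ℝ) * (Real.exp (-χ g) * v s0 / (R ^ n * v s))
  have hπ : ∀ s, 0 < π s := fun s => mul_pos (hw s) (hv s)
  have hc : ∀ s t, 0 ≤ c s t := by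
    intro s t
    have := hw s
    have := hv t
    simp only [c]
    split_ifs
    · positivity
    · exact le_rfl
  have hrow : ∀ s, ∑ t, c s t ≤ π s := by
    intro s
    have h2 : ∑ t, c s t =
        w s / R * ∑ u : S, (if A s u = true then Real.exp (χ (φ s u)) * v u else 0) := by
      rw [Finset.mul_sum]
      refine Finset.sum_congr rfl fun t _ => ?_
      simp only [c]
      split_ifs <;> ring
    rw [h2]
    calc _ ≤ w s / R * (R * v s) :=
          mul_le_mul_of_nonneg_left (hM s) (div_nonneg (hw s).le hR.le)
      _ = π s := by simp only [π]; field_simp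
  have hcol : ∀ t, ∑ s, c s t ≤ π t := by
    intro t
    have h2 : ∑ s, c s t =
        v t / R * ∑ s : S, (if A s t = true then w s * Real.exp (χ (φ s t)) else 0) := by
      rw [Finset.mul_sum]
      refine Finset.sum_congr rfl fun s _ => ?_
      simp only [c]
      split_ifs <;> ring
    rw [h2]
    calc _ ≤ v t / R * (R * w t) :=
          mul_le_mul_of_nonneg_left (hL t) (div_nonneg (hv t).le hR.le)
      _ = π t := by simp only [π]; field_simp
  have hu0 : ∀ n s g, 0 ≤ u n s g := by
    intro n s g
    have := hv s
    have := hv s0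
    simp only [u]
    positivity
  have hu : ∀ n s, FS (u n s) := by
    intro n s
    have hfin := (W_support (A := A) (φ := φ) n s s0).preimage
      (f := fun g : G => g⁻¹) inv_injective.injOn
    refine Set.Finite.subset hfin fun g hg => ?_
    intro h0
    apply hg
    simp only [u]
    rw [h0]
    simp
  have hP : ∀ n s g, Pop c π φ (u n) s g = u (n + 1) s g := by
    intro n s g
    simp only [Pop, u, W]
    push_cast
    rw [Finset.sum_mul]
    refine Finset.sum_congr rfl fun t _ => ?_
    have := (hv s).ne'
    have := (hv t).ne'
    have := (hw s).ne'
    by_cases hA : A s t = true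
    · simp only [c, π, hA, if_true]
      rw [hχ, neg_add, Real.exp_add, mul_inv_rev, Real.exp_neg (χ (φ s t)), pow_succ]
      have := (Real.exp_pos (χ (φ s t))).ne'
      field_simp
    · simp [c, hA]
  have hb0 : ∀ n, 0 ≤ nrm π (u n) := fun n =>
    Finset.sum_nonneg fun s _ => mul_nonneg (hπ s).le (tsum_nonneg fun g => sq_nonneg _)
  obtain ⟨N, hN⟩ : ∃ N, nrm π (u N) / 2 < nrm π (u (N + m)) := by
    by_contra hcon
    push Not at hcon
    obtain ⟨C, hC0, hC⟩ := decay hb0 hm (by positivity) hτ hcon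
    apply H (Real.sqrt (C / π s0))
    intro n
    have h2 : π s0 * ((W A φ n s0 s0 1 : ℝ) / R ^ n) ^ 2 ≤ nrm π (u n) := by
      have h3 : ((W A φ n s0 s0 1 : ℝ) / R ^ n) ^ 2 ≤ ∑' g, u n s0 g ^ 2 := by
        have h4 := (hu n s0).sq.summable.le_tsum 1 (fun g _ => sq_nonneg _)
        have h5 : u n s0 1 = (W A φ n s0 s0 1 : ℝ) / R ^ n := by
          have := (hv s0).ne'
          simp only [u, h1, neg_zero, Real.exp_zero, inv_one]
          field_simp
        rwa [h5] at h4
      calc _ ≤ π s0 * ∑' g, u n s0 g ^ 2 := mul_le_mul_of_nonneg_left h3 (hπ s0).le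
        _ ≤ _ := Finset.single_le_sum (f := fun s => π s * ∑' g, u n s g ^ 2)
          (fun s _ => mul_nonneg (hπ s).le (tsum_nonneg fun g => sq_nonneg _)) (mem_univ s0)
    have h6 := h2.trans (hC n)
    have h7 : ((W A φ n s0 s0 1 : ℝ) / R ^ n) ^ 2 ≤ (Real.sqrt (C / π s0) * τ ^ n) ^ 2 := by
      rw [mul_pow, Real.sq_sqrt (div_nonneg hC0 (hπ s0).le), div_mul_eq_mul_div,
        le_div_iff₀ (hπ s0), ← pow_mul, mul_comm n 2, pow_mul]
      linarith
    have h8 := (pow_le_pow_iff_left₀ (by positivity) (by positivity) (by norm_num)).1 h7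
    rw [div_le_iff₀ (by positivity)] at h8
    rw [mul_pow]
    linarith
  have h9 := hb0 N
  exact window hc hπ hrow hcol u hu0 hu hP hε m N hεm (by linarith) (by linarith)

lemma edge_aux {χ : G → ℝ} (hχ : ∀ a b, χ (a * b) = χ a + χ b) {v w : S → ℝ}
    (hv : ∀ s, 0 < v s) (hw : ∀ s, 0 < w s) {R D : ℝ} (hR : 0 < R) (hD : 0 < D)
    (h1 : ∀ s t, v t ≤ D * v s) (h2 : ∀ s t, w s ≤ D * w t)
    (h3 : ∀ s t, Real.exp (-χ (φ s t)) * v s ≤ D * v t) {ε : ℝ} (hε : 0 < ε)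
    {f : S → G → ℝ} (hpos : 0 < ∑ s, w s * v s * ∑' g, f s g ^ 2)
    (hE : ∑ s, ∑ t, (if A s t = true then w s * Real.exp (χ (φ s t)) * v t / R else 0) *
        ∑' g, (f s g - f t (g * φ s t)) ^ 2 ≤
        2 * ε * ∑ s, w s * v s * ∑' g, f s g ^ 2) :
    0 < ∑ s, ∑' g, f s g ^ 2 ∧ ∀ s t, A s t = true →
      ∑' g, (f s g - f t (g * φ s t)) ^ 2 ≤ 2 * ε * D ^ 3 * R * ∑ s, ∑' g, f s g ^ 2 := by
  have hn : ∀ s, 0 ≤ ∑' g, f s g ^ 2 := fun s => tsum_nonneg fun g => sq_nonneg _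
  have hF0 : 0 ≤ ∑ s, ∑' g, f s g ^ 2 := Finset.sum_nonneg fun s _ => hn s
  have hle : ∀ s, ∑ a, w a * v a * ∑' g, f a g ^ 2 ≤
      D ^ 2 * (w s * v s) * ∑ s, ∑' g, f s g ^ 2 := by
    intro s
    rw [Finset.mul_sum]
    refine Finset.sum_le_sum fun a _ => mul_le_mul_of_nonneg_right ?_ (hn a)
    calc w a * v a ≤ (D * w s) * (D * v s) :=
          mul_le_mul (h2 a s) (h1 s a) (hv a).le (mul_nonneg hD.le (hw s).le)
      _ = _ := by ring
  constructor
  · rcases hF0.lt_or_eq with h | h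
    · exact h
    · exfalso
      have h5 : ∀ s, ∑' g, f s g ^ 2 = 0 := fun s =>
        (Finset.sum_eq_zero_iff_of_nonneg fun s _ => hn s).1 h.symm s (mem_univ s)
      simp [h5] at hpos
  · intro s t hA
    set X := ∑' g, (f s g - f t (g * φ s t)) ^ 2 with hX
    have hX0 : 0 ≤ X := tsum_nonneg fun g => sq_nonneg _
    have hcn : ∀ a b, 0 ≤ (if A a b = true then w a * Real.exp (χ (φ a b)) * v b / R else 0) *
        ∑' g, (f a g - f b (g * φ a b)) ^ 2 := by
      intro a b
      have := hw a
      have := hv b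
      refine mul_nonneg ?_ (tsum_nonneg fun g => sq_nonneg _)
      split_ifs
      · positivity
      · exact le_rfl
    have h6 : (w s * Real.exp (χ (φ s t)) * v t / R) * X ≤
        2 * ε * ∑ s, w s * v s * ∑' g, f s g ^ 2 := by
      refine le_trans ?_ hE
      calc _ = (if A s t = true then w s * Real.exp (χ (φ s t)) * v t / R else 0) *
            ∑' g, (f s g - f t (g * φ s t)) ^ 2 := by rw [if_pos hA]
        _ ≤ ∑ b, (if A s b = true then w s * Real.exp (χ (φ s b)) * v b / R else 0) *
            ∑' g, (f s g - f b (g * φ s b)) ^ 2 :=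
            Finset.single_le_sum (f := fun b =>
              (if A s b = true then w s * Real.exp (χ (φ s b)) * v b / R else 0) *
              ∑' g, (f s g - f b (g * φ s b)) ^ 2) (fun b _ => hcn s b) (mem_univ t)
        _ ≤ _ := Finset.single_le_sum (f := fun a => ∑ b,
              (if A a b = true then w a * Real.exp (χ (φ a b)) * v b / R else 0) *
              ∑' g, (f a g - f b (g * φ a b)) ^ 2)
              (fun a _ => Finset.sum_nonneg fun b _ => hcn a b) (mem_univ s)
    have h7 : w s * v s / (D * R) ≤ w s * Real.exp (χ (φ s t)) * v t / R := by
      have h8 := h3 s t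
      rw [Real.exp_neg, inv_mul_le_iff₀ (Real.exp_pos _)] at h8
      rw [div_le_div_iff₀ (by positivity) hR]
      have h10 := mul_le_mul_of_nonneg_left h8 (mul_nonneg (hw s).le hR.le)
      linarith
    have h11 := mul_le_mul_of_nonneg_right h7 hX0
    have h12 := mul_le_mul_of_nonneg_left (hle s) (by positivity : 0 ≤ 2 * ε)
    have h13 : w s * v s / (D * R) * X ≤
        2 * ε * (D ^ 2 * (w s * v s) * ∑ s, ∑' g, f s g ^ 2) := h11.trans (h6.trans h12)
    have hp : 0 < w s * v s / (D * R) := by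
      have := hw s
      have := hv s
      positivity
    refine le_of_mul_le_mul_left (h13.trans (le_of_eq ?_)) hp
    field_simp

end

end GE

namespace GE

open Finset

noncomputable section

set_option linter.unusedSectionVars false

attribute [local instance] Classical.propDecidable

variable {S : Type*} [Fintype S] {G : Type*} [Group G]
variable {A : S → S → Bool} {φ : S → S → G}

lemma star {ψ : Space A → G} (hφ : ∀ x : Space A, ψ x = φ (x.1 0) (x.1 1))
    (hirr : Irr A φ) (s0 : S) (heq : hGur ψ = hGur (fun x => Abelianization.of (ψ x)))
    (η : ℝ) (hη : 0 < η) :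
    ∃ f : S → G → ℝ, (∀ s, FS (f s)) ∧ 0 < ∑ s, ∑' g, f s g ^ 2 ∧
      ∀ s t, A s t = true →
        ∑' g, (f s g - f t (g * φ s t)) ^ 2 ≤ η * ∑ s, ∑' g, f s g ^ 2 := by
  set h := hGur ψ with hh
  obtain ⟨r, hrdef⟩ : ∃ r, r = Real.exp h := ⟨_, rfl⟩
  have hr : 0 < r := hrdef ▸ Real.exp_pos h
  have hlog : Real.log r = h := by rw [hrdef, Real.log_exp]
  -- path lengths
  have hirr' := hirr
  choose k _ hk using hirr'
  let K : ℕ := ∑ s, ∑ t, (k s t 1 + k t s (φ s t)⁻¹)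
  have hK0 : ∀ s t, k s t 1 + k t s (φ s t)⁻¹ ≤ K := by
    intro s t
    calc _ ≤ ∑ t, (k s t 1 + k t s (φ s t)⁻¹) :=
          Finset.single_le_sum (f := fun t => k s t 1 + k t s (φ s t)⁻¹)
            (fun _ _ => Nat.zero_le _) (mem_univ t)
      _ ≤ K := Finset.single_le_sum (f := fun s => ∑ t, (k s t 1 + k t s (φ s t)⁻¹))
            (fun _ _ => Nat.zero_le _) (mem_univ s)
  obtain ⟨D, hDdef⟩ : ∃ D, D = (2 * r) ^ K := ⟨_, rfl⟩
  have hD : 0 < D := by rw [hDdef]; positivity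
  obtain ⟨ε, hεdef⟩ : ∃ ε, ε = η / (2 * D ^ 3 * (2 * r)) := ⟨_, rfl⟩
  have hε : 0 < ε := by rw [hεdef]; positivity
  obtain ⟨m, hm, hεm⟩ : ∃ m : ℕ, 0 < m ∧ 4 ≤ ε ^ 2 * m := by
    obtain ⟨m, hm⟩ := exists_nat_ge (4 / ε ^ 2)
    have h4 : 4 ≤ ε ^ 2 * m := by
      rw [div_le_iff₀ (by positivity)] at hm
      linarith
    refine ⟨m, ?_, h4⟩
    rcases Nat.eq_zero_or_pos m with h0 | h0
    · subst h0
      norm_num at h4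
    · exact h0
  have hm1 : (1 : ℝ) ≤ m := by exact_mod_cast hm
  obtain ⟨a, hadef⟩ : ∃ a : ℝ, a = 1 / (4 * m) := ⟨_, rfl⟩
  have ha0 : 0 < a := by rw [hadef]; positivity
  have ham : a * (4 * m) = 1 := by rw [hadef]; field_simp
  have ha1 : a ≤ 1 / 4 := by nlinarith
  have hτ : 1 / 2 ≤ ((1 - a) ^ 2) ^ m := by
    rw [← pow_mul]
    have hB := one_add_mul_le_pow (a := -a) (by linarith) (2 * m)
    push_cast at hB
    rw [← sub_eq_add_neg] at hB
    linarith
  have hq0 : 0 < r * (1 + a / 4) := by positivity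
  have hqr : r * (1 + a / 4) < r * (1 + a / 2) := by
    apply mul_lt_mul_of_pos_left _ hr
    linarith
  have hrR : r * (1 + a / 2) < r * (1 + a) := by
    apply mul_lt_mul_of_pos_left _ hr
    linarith
  obtain ⟨R, hRdef⟩ : ∃ R, R = r * (1 + a) := ⟨_, rfl⟩
  rw [← hRdef] at hrR
  have hR : 0 < R := by rw [hRdef]; positivity
  have hR2 : R ≤ 2 * r := by rw [hRdef]; nlinarith
  have hhR : h < Real.log R := by
    rw [← hlog]
    apply Real.log_lt_log hr
    rw [hRdef]
    nlinarith
  have hR1 : 1 ≤ R := by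
    obtain ⟨C, hC⟩ := growth_le hφ hirr hR hhR s0 s0 1
    exact one_le_of_growth hirr s0 hR hC
  have hRD : ∀ n ≤ K, R ^ n ≤ D := by
    intro n hn
    rw [hDdef]
    exact (pow_le_pow_right₀ hR1 hn).trans (pow_le_pow_left₀ hR.le hR2 K)
  have hsurj : Function.Surjective (Abelianization.of : G →* Abelianization G) :=
    QuotientGroup.mk_surjective
  have hirrab := irr_hom hirr Abelianization.of hsurj
  have hφab : ∀ x : Space A, Abelianization.of (ψ x) =
      (fun a b => Abelianization.of (φ a b)) (x.1 0) (x.1 1) := by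
    intro x; rw [hφ]
  have hhq : h < Real.log (r * (1 + a / 4)) := by
    rw [← hlog]
    apply Real.log_lt_log hr
    nlinarith
  rw [heq] at hhq
  have hC := fun s t g => growth_le (ψ := fun x => Abelianization.of (ψ x)) hφab hirrab hq0 hhq s t g
  obtain ⟨χ', v, hχ', hv, hM'⟩ :=
    exists_char (almInv_comm (Abelianization G)).amenable hirrab hq0 hqr hC s0
  let χ : G → ℝ := fun g => χ' (Abelianization.of g)
  have hχ : ∀ a b, χ (a * b) = χ a + χ b := by
    intro a b
    simp only [χ, map_mul, hχ']
  have hM0 : ∀ s, ∑ u : S, (if A s u = true then Real.exp (χ (φ s u)) * v u else 0) ≤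
      r * (1 + a / 2) * v s := hM'
  obtain ⟨w, hw, hL⟩ := left_vec (E := fun s t => Real.exp (χ (φ s t)))
    (fun _ _ => Real.exp_pos _) hv (hq0.trans hqr) hrR hM0 hirr s0
  have hM : ∀ s, ∑ u : S, (if A s u = true then Real.exp (χ (φ s u)) * v u else 0) ≤ R * v s :=
    fun s => (hM0 s).trans (mul_le_mul_of_nonneg_right hrR.le (hv s).le)
  have hχ1 : χ 1 = 0 := by have := hχ 1 1; simp at this; exact this
  have hχinv : ∀ g, χ g⁻¹ = -χ g := by
    intro g
    have := hχ g⁻¹ g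
    rw [inv_mul_cancel, hχ1] at this
    linarith
  have hWB : ∀ s t g, k s t g ≤ K → Real.exp (χ g) * v t ≤ D * v s := by
    intro s t g hkK
    have hb := W_bound hχ hv hR.le hM (k s t g) s t g
    have h1 : (1 : ℝ) ≤ W A φ (k s t g) s t g := by exact_mod_cast hk s t g
    have h2 : 0 ≤ Real.exp (χ g) * v t := mul_nonneg (Real.exp_pos _).le (hv t).le
    calc Real.exp (χ g) * v t ≤ W A φ (k s t g) s t g * (Real.exp (χ g) * v t) :=
          le_mul_of_one_le_left h2 h1
      _ ≤ _ := hb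
      _ ≤ D * v s := mul_le_mul_of_nonneg_right (hRD _ hkK) (hv s).le
  have hv1 : ∀ s t, v t ≤ D * v s := by
    intro s t
    have := hWB s t 1 (le_trans (Nat.le_add_right _ _) (hK0 s t))
    simpa [hχ1] using this
  have hw1 : ∀ s t, w s ≤ D * w t := by
    intro s t
    have hb := W_bound_left hχ hR.le hw hL (k s t 1) s t 1 (hk s t 1)
    rw [hχ1, Real.exp_zero, mul_one] at hb
    exact hb.trans (mul_le_mul_of_nonneg_right
      (hRD _ (le_trans (Nat.le_add_right _ _) (hK0 s t))) (hw t).le)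
  have hv2 : ∀ s t, Real.exp (-χ (φ s t)) * v s ≤ D * v t := by
    intro s t
    have := hWB t s (φ s t)⁻¹ (le_trans (Nat.le_add_left _ _) (hK0 s t))
    rwa [hχinv] at this
  have hnot : ∀ C : ℝ, ¬ ∀ n, (W A φ n s0 s0 1 : ℝ) ≤ C * (R * (1 - a)) ^ n := by
    intro C hC
    have hpos : 0 < R * (1 - a) := mul_pos hR (by linarith)
    have h1 := hGur_le hφ hirr s0 hpos hC
    have h2 : R * (1 - a) < r := by
      rw [hRdef]
      nlinarith [mul_pos hr (mul_pos ha0 ha0)]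
    have h3 := Real.log_lt_log hpos h2
    rw [hlog] at h3
    linarith
  obtain ⟨f, hf, hpos, hE⟩ := star_aux hχ hv hw hR hM hL s0 hm (by linarith) hτ hnot hε hεm
  obtain ⟨hp, hedge⟩ := edge_aux hχ hv hw hR hD hv1 hw1 hv2 hε hpos hE
  refine ⟨f, hf, hp, fun s t hA => (hedge s t hA).trans ?_⟩
  refine mul_le_mul_of_nonneg_right ?_ hp.le
  calc 2 * ε * D ^ 3 * R ≤ 2 * ε * D ^ 3 * (2 * r) := by gcongr
    _ = η := by rw [hεdef]; field_simp

end

end GE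

/-- If `T_ψ` is transitive then
`h_Gur(T_ψ) = h_Gur(T_{ψ^{ab}})` if and only if `G` is amenable. -/
theorem statement2
    {S : Type*} [Fintype S] {A : S → S → Bool} (hA : Aperiodic A)
    {G : Type*} [Group G] [Countable G]
    (ψ : Space A → G) (hψ : TwoCoord ψ)
    (htrans : TransitiveExt ψ) :
    hGur ψ = hGur (fun x => Abelianization.of (ψ x)) ↔ Amenable G := by
  classical
  obtain ⟨p, hp⟩ := id htrans
  let φ : S → S → G := fun s t =>
    if h : ∃ x : Space A, x.1 0 = s ∧ x.1 1 = t then ψ h.choose else 1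
  have hφ : ∀ x : Space A, ψ x = φ (x.1 0) (x.1 1) := by
    intro x
    have h : ∃ y : Space A, y.1 0 = x.1 0 ∧ y.1 1 = x.1 1 := ⟨x, rfl, rfl⟩
    simp only [φ]
    rw [dif_pos h]
    exact hψ _ _ h.choose_spec.1.symm h.choose_spec.2.symm
  have hirr : GE.Irr A φ := fun s t g => GE.irred hφ hA htrans s t g
  have s0 : S := p.1.1 0
  constructor
  · intro heq
    exact (GE.almInv_of_star hirr (GE.star hφ hirr s0 heq)).amenable
  · intro ham
    exact le_antisymm
      (GE.hGur_le_ab hφ hirr s0 Abelianization.of QuotientGroup.mk_surjective)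
      (GE.hGur_ab_le hφ hirr s0 ham)
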